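/- Let 𝔤 be a finite-dimensional complex simple Lie algebra of type E6 and let (e,h,f) be an sl2-triple in 𝔤 such that e is a distinguished nilpotent element with dim 𝔤^e = 12. Then the centre 𝔷(𝔤^e) of 𝔤^e has dimension 4, the eigenvalues of the restriction of ad h to 𝔷(𝔤^e) are 2, 8 and 10 (the eigenvalue 10 occurring with multiplicity 2), and e satisfies property (P). -/

import Mathlib

open scoped ComplexOrder

/-- The centralizer `𝔤^e = {x ∈ 𝔤 : ⁅x, e⁆ = 0}` of an element `e`, as a Lie subalgebra. -/
def centralizer (L : Type*) [LieRing L] [LieAlgebra ℂ L] (e : L) : LieSubalgebra ℂ L where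
  carrier := {x : L | ⁅x, e⁆ = 0}
  add_mem' := fun {a b} ha hb => by
    simp only [Set.mem_setOf_eq] at *
    rw [add_lie, ha, hb, add_zero]
  zero_mem' := by simp
  smul_mem' := fun c a ha => by
    simp only [Set.mem_setOf_eq] at *
    rw [smul_lie, ha, smul_zero]
  lie_mem' := fun {a b} ha hb => by
    simp only [Set.mem_setOf_eq] at *
    simp [lie_lie, ha, hb]

/-- Membership in the centre `𝔷(𝔤^e)` of the centralizer of `e`:
`v` centralizes `e` and commutes with every element of `𝔤^e`. -/
def InCenterOfCentralizer (L : Type*) [LieRing L] [LieAlgebra ℂ L] (e v : L) : Prop :=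
  ⁅v, e⁆ = 0 ∧ ∀ y : L, ⁅y, e⁆ = 0 → ⁅v, y⁆ = 0

/-- The centre `𝔷(𝔤^e)` of the centralizer of `e`, as a subspace of `L`. -/
def zCenter (L : Type*) [LieRing L] [LieAlgebra ℂ L] (e : L) : Submodule ℂ L where
  carrier := {v : L | ⁅v, e⁆ = 0 ∧ ∀ y : L, ⁅y, e⁆ = 0 → ⁅v, y⁆ = 0}
  add_mem' := fun {a b} ha hb => ⟨by rw [add_lie, ha.1, hb.1, add_zero],
    fun y hy => by rw [add_lie, ha.2 y hy, hb.2 y hy, add_zero]⟩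
  zero_mem' := ⟨zero_lie e, fun y _ => zero_lie y⟩
  smul_mem' := fun c a ha => ⟨by rw [smul_lie, ha.1, smul_zero],
    fun y hy => by rw [smul_lie, ha.2 y hy, smul_zero]⟩

/-- Property (P) for an `sl₂`-triple `(e, h, f)`: for every nonzero `v ∈ 𝔷(𝔤^e)`, the
eigenspace `𝔷_max` of the restriction of `ad h` to `𝔷(𝔤^e)` for its largest eigenvalue is
contained in `[[f, 𝔤^e], v] = {⁅⁅f, x⁆, v⁆ : x ∈ 𝔤^e}`. -/
def PropertyP (L : Type*) [LieRing L] [LieAlgebra ℂ L] (e h f : L) : Prop :=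
  ∀ m : ℂ,
    (∃ z : L, z ≠ 0 ∧ InCenterOfCentralizer L e z ∧ ⁅h, z⁆ = m • z) →
    (∀ m' : ℂ, (∃ z : L, z ≠ 0 ∧ InCenterOfCentralizer L e z ∧ ⁅h, z⁆ = m' • z) → m' ≤ m) →
    ∀ v : L, InCenterOfCentralizer L e v → v ≠ 0 →
      ∀ z : L, InCenterOfCentralizer L e z → ⁅h, z⁆ = m • z →
        ∃ x : L, ⁅x, e⁆ = 0 ∧ ⁅⁅f, x⁆, v⁆ = z

/-- The stabilizer `{x ∈ 𝔮 : ξ(⁅x, y⁆) = 0 for all y ∈ 𝔮}` of a linear functional `ξ`. -/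
def coadStab (Q : Type*) [LieRing Q] [LieAlgebra ℂ Q] (ξ : Module.Dual ℂ Q) : Submodule ℂ Q where
  carrier := {x : Q | ∀ y : Q, ξ ⁅x, y⁆ = 0}
  add_mem' := fun {a b} ha hb y => by rw [add_lie, map_add, ha y, hb y, add_zero]
  zero_mem' := fun y => by rw [zero_lie, map_zero]
  smul_mem' := fun c a ha y => by rw [smul_lie, map_smul, ha y, smul_zero]

/-- The index of a complex Lie algebra:
`ind 𝔮 = min_{ξ ∈ 𝔮*} dim {x ∈ 𝔮 : ξ(⁅x, y⁆) = 0 for all y ∈ 𝔮}`. -/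
noncomputable def lieIndex (Q : Type*) [LieRing Q] [LieAlgebra ℂ Q] : ℕ :=
  ⨅ ξ : Module.Dual ℂ Q, Module.finrank ℂ ↥(coadStab Q ξ)

/-- A nilpotent element `e` is distinguished if the only `x ∈ 𝔤^e` such that `ad x` is a
semisimple endomorphism of `𝔤` is `x = 0`. -/
def IsDistinguished (L : Type*) [LieRing L] [LieAlgebra ℂ L] (e : L) : Prop :=
  ∀ x : L, ⁅x, e⁆ = 0 → (LieAlgebra.ad ℂ L x).IsSemisimple → x = 0

namespace E6Orbit
open LieAlgebra Module.End

section Killing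
variable {L : Type*} [LieRing L] [LieAlgebra ℂ L] [FiniteDimensional ℂ L]

theorem exists_jordan_decomposition [IsKilling ℂ L] (x : L) :
    ∃ s : L, (ad ℂ L s).IsSemisimple ∧ IsNilpotent (ad ℂ L (x - s)) ∧
      ∀ (y : L) (μ : ℂ), ⁅x, y⁆ = μ • y → ⁅s, y⁆ = μ • y := by
  obtain ⟨N, -, S, hS, hNn, hSs, hx⟩ := (ad ℂ L x).exists_isNilpotent_isSemisimple
  have hcomm : Commute (ad ℂ L x) S :=
    (Algebra.commute_of_mem_adjoin_self hS)
  have key : ∀ (μ : ℂ) (y : L), y ∈ (ad ℂ L x).maxGenEigenspace μ → S y = μ • y := by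
    intro μ y hy
    exact apply_eq_of_mem_of_comm_of_isFinitelySemisimple_of_isNil hy hcomm
      hSs.isFinitelySemisimple (by rwa [hx, add_sub_cancel_right])
  have htop := iSup_maxGenEigenspace_eq_top (ad ℂ L x)
  have hder : ∀ a b : L, S ⁅a, b⁆ = ⁅a, S b⁆ - ⁅b, S a⁆ := by
    intro a b
    have ha : a ∈ ⨆ μ : ℂ, (ad ℂ L x).maxGenEigenspace μ := htop ▸ Submodule.mem_top
    have hb : b ∈ ⨆ μ : ℂ, (ad ℂ L x).maxGenEigenspace μ := htop ▸ Submodule.mem_top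
    induction ha using Submodule.iSup_induction' with
    | zero => simp
    | add a₁ a₂ _ _ h₁ h₂ => simp only [add_lie, map_add, h₁, h₂, lie_add]; abel
    | mem μ a ha =>
      induction hb using Submodule.iSup_induction' with
      | zero => simp
      | add a₁ a₂ _ _ h₁ h₂ => simp only [add_lie, map_add, h₁, h₂, lie_add]; abel
      | mem ν b hb =>
        rw [key _ _ ha, key _ _ hb,
          key (μ + ν) _ (LieModule.lie_mem_maxGenEigenspace_toEnd ha hb), lie_smul, lie_smul,
          ← lie_skew a b]
        module
  obtain ⟨s, hs⟩ := LieDerivation.IsKilling.exists_eq_ad (⟨S, hder⟩ : LieDerivation ℂ L L)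
  have hs' : ad ℂ L s = S := by
    ext y
    simpa using LieDerivation.congr_fun hs y
  refine ⟨s, hs' ▸ hSs, ?_, ?_⟩
  · rwa [map_sub, hs', hx, add_sub_cancel_right]
  · intro y μ hy
    have := key μ y ((ad ℂ L x).mem_maxGenEigenspace μ y |>.2 ⟨1, by simp [hy]⟩)
    rwa [← hs'] at this

end Killing

section Descent
variable {V : Type*} [AddCommGroup V] [Module ℂ V]

theorem mul_pow_succ_of_sl2 {E F S N : Module.End ℂ V} (hEF : E * F - F * E = S + N)
    (hSF : S * F - F * S = (-2 : ℂ) • F) (hNF : Commute N F) (k : ℕ) :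
    E * F ^ (k + 1) = F ^ (k + 1) * E
      + ((k : ℂ) + 1) • (F ^ k * (S + N - (k : ℂ) • 1)) := by
  have hS : S * F = F * S - (2 : ℂ) • F := by
    rw [sub_eq_iff_eq_add] at hSF; rw [hSF]; module
  have hE : E * F = F * E + S + N := by
    rw [sub_eq_iff_eq_add] at hEF; rw [hEF]; abel
  induction k with
  | zero => simp [hE, add_assoc]
  | succ k ih =>
    have h1 : (S + N - (k : ℂ) • 1) * F = F * (S + N - ((k : ℂ) + 2) • 1) := by
      simp only [add_mul, sub_mul, mul_add, mul_sub, hS, hNF.eq, smul_mul_assoc, one_mul,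
        mul_smul_comm, mul_one]
      module
    rw [pow_succ F (k + 1), ← mul_assoc, ih, add_mul, mul_assoc _ E F, hE, smul_mul_assoc,
      mul_assoc, h1, ← mul_assoc, ← pow_succ]
    simp only [mul_add, mul_sub, mul_smul_comm, mul_one, ← mul_assoc, ← pow_succ]
    push_cast
    module

theorem isNilpotent_of_bracket_eq_smul [FiniteDimensional ℂ V] {F S : Module.End ℂ V} {c : ℂ}
    (hc : c ≠ 0) (hSF : S * F - F * S = c • F) : IsNilpotent F := by
  have hpow : ∀ k : ℕ, S * F ^ k - F ^ k * S = ((k : ℂ) * c) • F ^ k := by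
    intro k
    induction k with
    | zero => simp
    | succ k ih =>
      have : S * F ^ (k + 1) - F ^ (k + 1) * S
          = (S * F ^ k - F ^ k * S) * F + F ^ k * (S * F - F * S) := by
        rw [pow_succ]; noncomm_ring
      rw [this, ih, hSF, smul_mul_assoc, mul_smul_comm, ← pow_succ, ← add_smul]
      push_cast; ring_nf
  by_contra hF
  have hinf : (Set.range fun k : ℕ => (k : ℂ) * c).Infinite :=
    Set.infinite_range_of_injective fun a b hab => by
      simpa [hc] using hab
  refine hinf ((Module.End.finite_hasEigenvalue
    (LinearMap.mulLeft ℂ S - LinearMap.mulRight ℂ S)).subset ?_)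
  rintro _ ⟨k, rfl⟩
  refine Module.End.hasEigenvalue_of_hasEigenvector (x := F ^ k) ⟨?_, fun h0 => hF ⟨k, h0⟩⟩
  rw [Module.End.mem_eigenspace_iff]
  simpa using hpow k

theorem pow_apply_eq_zero_of_sl2 {E F S N : Module.End ℂ V} (hEF : E * F - F * E = S + N)
    (hSF : S * F - F * S = (-2 : ℂ) • F) (hNF : Commute N F) (hN : IsNilpotent N)
    (hF : IsNilpotent F) {y : V} {μ : ℂ} (hy : S y = μ • y) (hFE : F (E y) = 0) (k₀ : ℕ)
    (hμ : ∀ k : ℕ, k₀ ≤ k → μ ≠ k) : (F ^ k₀) y = 0 := by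
  obtain ⟨m, hm⟩ := hF
  have hm' : (F ^ (k₀ + m)) y = 0 := by rw [pow_add, hm, mul_zero]; rfl
  clear hm
  induction m with
  | zero => exact hm'
  | succ m ih =>
    apply ih
    have hk := hμ (k₀ + m) (by omega)
    have h1 := congrArg (· y) (mul_pow_succ_of_sl2 hEF hSF hNF (k₀ + m))
    have h2 : (F ^ (k₀ + m)) ((N + (μ - (k₀ + m : ℕ)) • (1 : Module.End ℂ V)) y) = 0 := by
      have h3 : (F ^ (k₀ + m + 1)) (E y) = 0 := by
        rw [pow_succ, Module.End.mul_apply, hFE, map_zero]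
      have h4 : (F ^ (k₀ + m + 1)) y = 0 := hm'
      simp only [Module.End.mul_apply, LinearMap.add_apply, LinearMap.smul_apply, h3, h4,
        map_zero, zero_add, LinearMap.sub_apply, hy, Module.End.one_apply] at h1
      have h5 : ((k₀ + m : ℕ) : ℂ) + 1 ≠ 0 := Nat.cast_add_one_ne_zero _
      have h6 := (smul_eq_zero.1 h1.symm).resolve_left h5
      rw [← h6]
      congr 1
      simp only [LinearMap.add_apply, LinearMap.smul_apply, Module.End.one_apply]
      module
    have hcomm : Commute (N + (μ - (k₀ + m : ℕ)) • (1 : Module.End ℂ V)) (F ^ (k₀ + m)) :=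
      ((hNF.add_left ((Commute.one_left _).smul_left _))).pow_right _
    rw [← Module.End.mul_apply, ← hcomm.eq, Module.End.mul_apply] at h2
    have hu : IsUnit (N + (μ - (k₀ + m : ℕ)) • (1 : Module.End ℂ V)) := by
      refine hN.isUnit_add_right_of_commute ?_ ((Commute.one_right _).smul_right _)
      exact (isUnit_smul_iff (Units.mk0 _ (sub_ne_zero.2 hk)) _).2 isUnit_one
    exact (Module.End.isUnit_iff _).1 hu |>.1 (h2.trans (map_zero _).symm)

end Descent

section Triple
variable {L : Type*} [LieRing L] [LieAlgebra ℂ L] [FiniteDimensional ℂ L] {h e f : L}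

theorem ad_pow_apply_eq_zero (t : IsSl2Triple h e f) {s : L} (hsf : ⁅s, f⁆ = (-2 : ℂ) • f)
    (hn : IsNilpotent (ad ℂ L (h - s))) {y : L} {μ : ℂ}
    (hy : ⁅s, y⁆ = μ • y) (hfe : ⁅f, ⁅e, y⁆⁆ = 0) (k₀ : ℕ) (hμ : ∀ k : ℕ, k₀ ≤ k → μ ≠ k) :
    ((ad ℂ L f) ^ k₀) y = 0 := by
  have hSF : ad ℂ L s * ad ℂ L f - ad ℂ L f * ad ℂ L s = (-2 : ℂ) • ad ℂ L f := by
    ext z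
    change ⁅s, ⁅f, z⁆⁆ - ⁅f, ⁅s, z⁆⁆ = (-2 : ℂ) • ⁅f, z⁆
    rw [← smul_lie, ← hsf, lie_lie]
  refine pow_apply_eq_zero_of_sl2 (E := ad ℂ L e) (S := ad ℂ L s) (N := ad ℂ L (h - s))
    ?_ hSF ?_ hn (isNilpotent_of_bracket_eq_smul (by norm_num) hSF) hy hfe k₀ hμ
  · ext z
    simp [← t.lie_e_f]
  · have h0 : ⁅h - s, f⁆ = 0 := by
      rw [sub_lie, hsf, t.lie_lie_smul_f ℂ]; module
    ext z
    change ⁅h - s, ⁅f, z⁆⁆ = ⁅f, ⁅h - s, z⁆⁆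
    rw [leibniz_lie, h0, zero_lie, zero_add]

theorem ad_pow_apply_eq_zero' (t : IsSl2Triple h e f) {s : L} (hse : ⁅s, e⁆ = (2 : ℂ) • e)
    (hn : IsNilpotent (ad ℂ L (h - s))) {y : L} {μ : ℂ}
    (hy : ⁅s, y⁆ = μ • y) (hfe : ⁅e, ⁅f, y⁆⁆ = 0) (k₀ : ℕ) (hμ : ∀ k : ℕ, k₀ ≤ k → -μ ≠ k) :
    ((ad ℂ L e) ^ k₀) y = 0 := by
  refine ad_pow_apply_eq_zero t.symm (s := -s) ?_ ?_ ?_ hfe k₀ hμ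
  · rw [neg_lie, hse]; module
  · have : -h - -s = -(h - s) := by abel
    rw [this, map_neg]; exact hn.neg
  · rw [neg_lie, hy, neg_smul]

omit [FiniteDimensional ℂ L] in
theorem lie_lie_eq_smul {s a b : L} {μ ν : ℂ} (ha : ⁅s, a⁆ = μ • a) (hb : ⁅s, b⁆ = ν • b) :
    ⁅s, ⁅a, b⁆⁆ = (μ + ν) • ⁅a, b⁆ := by
  rw [leibniz_lie, ha, hb, smul_lie, lie_smul, add_smul]

theorem exists_lie_lie_eq (t : IsSl2Triple h e f) {s : L} (hse : ⁅s, e⁆ = (2 : ℂ) • e)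
    (hsf : ⁅s, f⁆ = (-2 : ℂ) • f) (hn : IsNilpotent (ad ℂ L (h - s))) {z : L} {μ : ℂ}
    (hz : ⁅s, z⁆ = μ • z) (hμ : ∀ k : ℕ, -μ ≠ k) :
    ∃ y : L, ⁅s, y⁆ = μ • y ∧ ⁅e, ⁅f, y⁆⁆ = z := by
  let G := (ad ℂ L s).eigenspace μ
  have memG : ∀ z, z ∈ G ↔ ⁅s, z⁆ = μ • z := fun z => mem_eigenspace_iff
  have hmaps : ∀ z ∈ G, (ad ℂ L e ∘ₗ ad ℂ L f) z ∈ G := by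
    intro z hz
    rw [memG] at hz ⊢
    change ⁅s, ⁅e, ⁅f, z⁆⁆⁆ = μ • ⁅e, ⁅f, z⁆⁆
    rw [lie_lie_eq_smul hse (lie_lie_eq_smul hsf hz)]; norm_num
  let T : G →ₗ[ℂ] G := (ad ℂ L e ∘ₗ ad ℂ L f).restrict hmaps
  have hT : Function.Injective T := by
    rw [← LinearMap.ker_eq_bot, LinearMap.ker_eq_bot']
    rintro ⟨z, hz⟩ hz0
    have h1 : ⁅e, ⁅f, z⁆⁆ = 0 := congrArg Subtype.val hz0
    have := ad_pow_apply_eq_zero' t hse hn ((memG z).1 hz) h1 0 (fun k _ => hμ k)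
    ext
    simpa using this
  obtain ⟨⟨y, hy⟩, hy'⟩ := LinearMap.injective_iff_surjective.1 hT ⟨z, (memG _).2 hz⟩
  exact ⟨y, (memG y).1 hy, congrArg Subtype.val hy'⟩

theorem killingForm_eq_zero_of_forall_isNilpotent (C : LieSubalgebra ℂ L)
    (hC : ∀ x ∈ C, IsNilpotent (ad ℂ L x)) {x y : L} (hx : x ∈ C) (hy : y ∈ C) :
    killingForm ℂ L x y = 0 := by
  have : LieModule.IsNilpotent C L :=
    (LieModule.isNilpotent_iff_forall (R := ℂ)).2 fun z => hC z z.2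
  have := LieModule.traceForm_eq_zero_of_isNilpotent ℂ C L
  exact LinearMap.congr_fun₂ this ⟨x, hx⟩ ⟨y, hy⟩

theorem eq_zero_of_lie_eq_zero_of_semisimple_part [IsKilling ℂ L]
    (t : IsSl2Triple h e f) (hdist : IsDistinguished L e) {s : L}
    (hs : (ad ℂ L s).IsSemisimple) (hse : ⁅s, e⁆ = (2 : ℂ) • e)
    (hsf : ⁅s, f⁆ = (-2 : ℂ) • f) (hn : IsNilpotent (ad ℂ L (h - s))) {x : L}
    (hxe : ⁅x, e⁆ = 0) (hsx : ⁅s, x⁆ = 0) : x = 0 := by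
  let C : LieSubalgebra ℂ L := centralizer L e ⊓ centralizer L s
  have memC : ∀ z, z ∈ C ↔ ⁅z, e⁆ = 0 ∧ ⁅s, z⁆ = 0 := fun z => by
    rw [← lie_skew s z, neg_eq_zero]; exact Iff.rfl
  have hCnil : ∀ z ∈ C, IsNilpotent (ad ℂ L z) := by
    intro z hz
    obtain ⟨s', hs', hn', hz'⟩ := exists_jordan_decomposition z
    have := hz' e 0 (by rw [((memC z).1 hz).1, zero_smul])
    have hs0 := hdist s' (by rw [this, zero_smul]) hs'
    rwa [hs0, sub_zero] at hn'
  have hCf : ∀ z ∈ C, ⁅f, z⁆ = 0 := by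
    intro z hz
    obtain ⟨h1, h2⟩ := (memC z).1 hz
    have := ad_pow_apply_eq_zero t hsf hn (y := z) (μ := 0) (by rw [h2, zero_smul])
      (by rw [← lie_skew e z, h1]; simp) 1 (fun k hk => by
        intro h0; have : k = 0 := by exact_mod_cast h0.symm
        omega)
    simpa using this
  have hL0 : ∀ z, ⁅s, z⁆ = 0 → ∃ y, z - ⁅f, y⁆ ∈ C := by
    intro z hz
    have hz0 : ⁅s, z⁆ = (0 : ℂ) • z := by rw [hz, zero_smul]
    obtain ⟨y, hy, h1⟩ := exists_lie_lie_eq t hse hsf hn (z := ⁅e, z⁆) (μ := 2)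
      (by rw [lie_lie_eq_smul hse hz0, add_zero]) (fun k h0 => by
        have : ((k + 2 : ℕ) : ℂ) = 0 := by push_cast; rw [← h0]; ring
        have := Nat.cast_eq_zero.1 this
        omega)
    refine ⟨y, (memC _).2 ⟨?_, ?_⟩⟩
    · rw [← lie_skew, lie_sub, h1, sub_self, neg_zero]
    · rw [lie_sub, hz, lie_lie_eq_smul hsf hy]; norm_num
  have hx : x ∈ C := (memC x).2 ⟨hxe, hsx⟩
  have hxs : ⁅x, s⁆ = 0 := by rw [← lie_skew, hsx, neg_zero]
  have hxf : ⁅x, f⁆ = 0 := by rw [← lie_skew, hCf x hx, neg_zero]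
  have hker : x ∈ LinearMap.ker (killingForm ℂ L) := by
    rw [LinearMap.mem_ker]
    ext z
    have hz : z ∈ ⨆ μ : ℂ, (ad ℂ L s).eigenspace μ :=
      hs.iSup_eigenspace_eq_top ▸ Submodule.mem_top
    induction hz using Submodule.iSup_induction' with
    | zero => simp
    | add a b _ _ ha hb => rw [map_add, ha, hb, map_add]
    | mem μ z hz =>
      rw [mem_eigenspace_iff] at hz
      have hz : ⁅s, z⁆ = μ • z := hz
      rcases eq_or_ne μ 0 with rfl | hμ
      · obtain ⟨y, hy⟩ := hL0 z (by rw [hz, zero_smul])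
        have h1 := killingForm_eq_zero_of_forall_isNilpotent C hCnil hx hy
        rw [map_sub, ← LieModule.traceForm_apply_lie_apply, hxf] at h1
        simpa using h1
      · have h1 := LieModule.traceForm_apply_lie_apply ℂ L L x s z
        rw [hxs, hz] at h1
        simpa [hμ] using h1
  simpa using hker

theorem isSemisimple_ad_of_isDistinguished [IsKilling ℂ L] (t : IsSl2Triple h e f)
    (hdist : IsDistinguished L e) :
    (ad ℂ L h).IsSemisimple ∧ ∀ x : L, ⁅x, e⁆ = 0 → ⁅h, x⁆ = 0 → x = 0 := by
  obtain ⟨s, hs, hn, hs'⟩ := exists_jordan_decomposition h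
  have hse := hs' e 2 (t.lie_h_e_smul ℂ)
  have hsf := hs' f (-2) (by rw [t.lie_lie_smul_f ℂ]; module)
  have hsh : ⁅s, h⁆ = 0 := by simpa using hs' h 0 (by simp)
  have key : ∀ {x : L}, ⁅x, e⁆ = 0 → ⁅s, x⁆ = 0 → x = 0 :=
    eq_zero_of_lie_eq_zero_of_semisimple_part t hdist hs hse hsf hn
  have h0 : h - s = 0 := key (by rw [sub_lie, hse, t.lie_h_e_smul ℂ, sub_self])
    (by rw [lie_sub, hsh, lie_self, sub_zero])
  rw [sub_eq_zero] at h0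
  subst h0
  exact ⟨hs, fun x => key⟩

theorem exists_lie_eq_of_eigenvalue_pos (t : IsSl2Triple h e f) {z : L} {m : ℤ} (hm : 0 < m)
    (hz : ⁅h, z⁆ = (m : ℂ) • z) : ∃ x : L, ⁅h, x⁆ = ((m - 2 : ℤ) : ℂ) • x ∧ ⁅e, x⁆ = z := by
  have hf : ⁅h, f⁆ = (-2 : ℂ) • f := by rw [t.lie_lie_smul_f ℂ]; module
  obtain ⟨y, hy, hyz⟩ := exists_lie_lie_eq t (t.lie_h_e_smul ℂ) hf (by simp) hz (fun k h0 => by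
    have : -m = k := by exact_mod_cast h0
    omega)
  refine ⟨⁅f, y⁆, ?_, hyz⟩
  rw [lie_lie_eq_smul hf hy]; push_cast; ring_nf

theorem eq_zero_of_lie_f_eq_zero (t : IsSl2Triple h e f) {z : L} {m : ℤ} (hm : 0 < m)
    (hz : ⁅h, z⁆ = (m : ℂ) • z) (hfz : ⁅f, z⁆ = 0) : z = 0 := by
  simpa using ad_pow_apply_eq_zero' t (t.lie_h_e_smul ℂ) (by simp) hz (by rw [hfz, lie_zero]) 0
    (fun k _ h0 => by
      have : -m = k := by exact_mod_cast h0
      omega)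

theorem eq_zero_of_lie_e_eq_zero (t : IsSl2Triple h e f) {z : L} {m : ℤ} (hm : m < 0)
    (hz : ⁅h, z⁆ = (m : ℂ) • z) (hez : ⁅e, z⁆ = 0) : z = 0 := by
  refine eq_zero_of_lie_f_eq_zero t.symm (m := -m) (by omega) ?_ hez
  rw [neg_lie, hz]; push_cast; module

theorem exists_int_of_eigenvalue (t : IsSl2Triple h e f) {z : L} {μ : ℂ}
    (hz : ⁅h, z⁆ = μ • z) (hz0 : z ≠ 0) : ∃ m : ℤ, μ = m := by
  by_contra! hμ
  have hSE : ad ℂ L h * ad ℂ L e - ad ℂ L e * ad ℂ L h = (2 : ℂ) • ad ℂ L e := by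
    ext z
    change ⁅h, ⁅e, z⁆⁆ - ⁅e, ⁅h, z⁆⁆ = (2 : ℂ) • ⁅e, z⁆
    rw [← smul_lie, ← t.lie_h_e_smul ℂ, lie_lie]
  obtain ⟨n, hn⟩ := isNilpotent_of_bracket_eq_smul (by norm_num) hSE
  have key : ∀ n : ℕ, ∀ z : L, ∀ μ : ℂ, ⁅h, z⁆ = μ • z → (∀ m : ℤ, μ ≠ m) →
      ((ad ℂ L e) ^ n) z = 0 → z = 0 := by
    intro n
    induction n with
    | zero => intro z μ _ _ h0; simpa using h0
    | succ n ih =>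
      intro z μ hz hμ h0
      have h1 : ⁅e, z⁆ = 0 := by
        refine ih ⁅e, z⁆ (2 + μ) (lie_lie_eq_smul (t.lie_h_e_smul ℂ) hz) (fun m hm => ?_) ?_
        · exact hμ (m - 2) (by push_cast; rw [← hm]; ring)
        · rw [pow_succ] at h0; exact h0
      simpa using ad_pow_apply_eq_zero t (by rw [t.lie_lie_smul_f ℂ]; module) (by simp) hz
        (by rw [h1, lie_zero]) 0 (fun k _ => by exact_mod_cast hμ k)
  exact hz0 (key n z μ hz hμ (by rw [hn]; rfl))

end Triple

section Exponential
open scoped Topology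
open NormedSpace

variable {V : Type*} [NormedAddCommGroup V] [NormedSpace ℂ V] [FiniteDimensional ℂ V]

theorem exp_apply_hasSum (A : V →L[ℂ] V) (x : V) :
    HasSum (fun n : ℕ => ((n.factorial : ℂ)⁻¹) • (A ^ n) x) (exp A x) := by
  have : CompleteSpace V := FiniteDimensional.complete ℂ V
  have h := exp_series_hasSum_exp' (𝕂 := ℂ) A
  exact h.mapL (ContinuousLinearMap.apply ℂ V x)

theorem exp_apply_eq_self {A : V →L[ℂ] V} {x : V} (hx : A x = 0) : exp A x = x := by
  refine (exp_apply_hasSum A x).unique ?_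
  convert hasSum_single (f := fun n : ℕ => ((n.factorial : ℂ)⁻¹) • (A ^ n) x) 0 ?_ using 1
  · simp
  · intro n hn
    obtain ⟨m, rfl⟩ := Nat.exists_eq_succ_of_ne_zero hn
    simp [pow_succ, hx]

theorem exp_apply_mem {A : V →L[ℂ] V} {W : Submodule ℂ V} (hA : ∀ w ∈ W, A w ∈ W) {w : V}
    (hw : w ∈ W) : exp A w ∈ W := by
  have hpow : ∀ n : ℕ, (A ^ n) w ∈ W := by
    intro n
    induction n with
    | zero => simpa using hw
    | succ n ih => rw [pow_succ']; exact hA _ ih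
  refine W.closed_of_finiteDimensional.mem_of_tendsto (exp_apply_hasSum A w)
    (Filter.Eventually.of_forall fun s => W.sum_mem fun n _ => W.smul_mem _ (hpow n))

theorem exp_apply_exp_neg_apply (A : V →L[ℂ] V) (x : V) : exp A (exp (-A) x) = x := by
  have : CompleteSpace V := FiniteDimensional.complete ℂ V
  let : NormedAlgebra ℚ (V →L[ℂ] V) := NormedAlgebra.restrictScalars ℚ ℂ _
  have h := NormedSpace.exp_add_of_commute ((Commute.refl A).neg_right)
  rw [add_neg_cancel, exp_zero] at h
  exact (congrArg (· x) h).symm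

theorem exp_apply_bilinear (β : V →L[ℂ] V →L[ℂ] V) (D : V →L[ℂ] V)
    (hD : ∀ x y, D (β x y) = β (D x) y + β x (D y)) (x y : V) :
    exp D (β x y) = β (exp D x) (exp D y) := by
  have : CompleteSpace V := FiniteDimensional.complete ℂ V
  have hexp : ∀ (c : ℂ) (t : ℂ), HasDerivAt (fun t : ℂ => exp ((t * c) • D))
      (exp ((t * c) • D) * (c • D)) t := by
    intro c t
    have h := hasDerivAt_exp_smul_const (𝕂 := ℂ) (c • D) t
    simpa [smul_smul] using h
  have hu : ∀ (v : V) (t : ℂ), HasDerivAt (fun t : ℂ => exp (t • D) v) (D (exp (t • D) v)) t := by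
    intro v t
    have h := (hasDerivAt_exp_smul_const' (𝕂 := ℂ) D t).clm_apply (hasDerivAt_const t v)
    simpa using h
  let φ : ℂ → V := fun t => exp ((t * (-1)) • D) (β (exp (t • D) x) (exp (t • D) y))
  have hφ : ∀ t, HasDerivAt φ 0 t := by
    intro t
    have hb : HasDerivAt (fun t : ℂ => β (exp (t • D) x) (exp (t • D) y))
        (D (β (exp (t • D) x) (exp (t • D) y))) t := by
      rw [hD]
      exact (((β.hasFDerivAt).comp_hasDerivAt t (hu x t)).clm_apply (hu y t))
    have h := (hexp (-1) t).clm_apply hb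
    convert h using 1
    simp
  have hconst : φ 1 = φ 0 := is_const_of_deriv_eq_zero (fun t => (hφ t).differentiableAt)
    (fun t => (hφ t).deriv) 1 0
  simp only [φ, one_mul, one_smul, zero_mul, zero_smul, exp_zero, one_apply_eq_self]
    at hconst
  rw [← hconst, neg_one_smul, exp_apply_exp_neg_apply]

theorem eventually_exists_exp_apply_eq (β : V →L[ℂ] V →L[ℂ] V) (Z Y W : Submodule ℂ V) {s d : V}
    (hs : s ∈ W) (hd : d ∈ W) (hZW : ∀ z ∈ Z, ∀ w ∈ W, β z w ∈ W) (hYW : Y ≤ W)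
    (hsurj : ∀ w ∈ W, ∃ z ∈ Z, ∃ y ∈ Y, β z s + y = w) :
    ∀ᶠ t in 𝓝 (0 : ℂ), ∃ z ∈ Z, ∃ y ∈ Y, exp (β z) (s + y) = s + t • d := by
  have : CompleteSpace V := FiniteDimensional.complete ℂ V
  have : CompleteSpace W := FiniteDimensional.complete ℂ W
  have : CompleteSpace (Z × Y) := FiniteDimensional.complete ℂ (Z × Y)
  obtain ⟨p, hp⟩ := W.subtype.exists_leftInverse_of_injective W.ker_subtype
  let π : V →L[ℂ] W := LinearMap.toContinuousLinearMap p
  have hπ : ∀ w (hw : w ∈ W), π w = ⟨w, hw⟩ := fun w hw => LinearMap.congr_fun hp ⟨w, hw⟩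
  let ιZ : Z × Y →L[ℂ] V := Z.subtypeL ∘L ContinuousLinearMap.fst ℂ Z Y
  let ιY : Z × Y →L[ℂ] V := Y.subtypeL ∘L ContinuousLinearMap.snd ℂ Z Y
  let F : Z × Y → W := fun q => π (exp (β (ιZ q)) (s + ιY q))
  have h1 : HasStrictFDerivAt (fun q : Z × Y => exp (β (ιZ q))) (β ∘L ιZ) 0 := by
    have h := hasStrictFDerivAt_exp_zero (𝕂 := ℂ) (𝔸 := V →L[ℂ] V)
    have h0 : (β ∘L ιZ) 0 = 0 := map_zero _
    rw [← h0] at h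
    exact h.comp 0 (β ∘L ιZ).hasStrictFDerivAt
  have h2 : HasStrictFDerivAt (fun q : Z × Y => s + ιY q) ιY 0 :=
    ιY.hasStrictFDerivAt.const_add s
  have h3 := π.hasStrictFDerivAt.comp 0 (h1.clm_apply h2)
  have hF0 : F 0 = π s := by simp [F]
  have h4 := HasStrictFDerivAt.map_nhds_eq_of_surj h3 (by
    rw [LinearMap.range_eq_top]
    rintro ⟨w, hw⟩
    obtain ⟨z, hz, y, hy, h⟩ := hsurj w hw
    refine ⟨(⟨z, hz⟩, ⟨y, hy⟩), ?_⟩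
    rw [← hπ w hw, ← h]
    simp [ιZ, ιY, add_comm])
  have hrange : Set.range F ∈ 𝓝 (π s) := by
    rw [← hF0]
    exact h4 ▸ Filter.range_mem_map
  have hcont : Filter.Tendsto (fun t : ℂ => π (s + t • d)) (𝓝 0) (𝓝 (π s)) := by
    have : Continuous fun t : ℂ => π (s + t • d) := by fun_prop
    simpa using this.tendsto 0
  filter_upwards [hcont hrange] with t ⟨⟨z, y⟩, hq⟩
  refine ⟨z, z.2, y, y.2, ?_⟩
  have hm : exp (β z) (s + y) ∈ W :=
    exp_apply_mem (hZW z z.2) (W.add_mem hs (hYW y.2))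
  have hq' : π (exp (β z) (s + y)) = π (s + t • d) := hq
  rw [hπ _ hm, hπ _ (W.add_mem hs (W.smul_mem t hd))] at hq'
  exact congrArg Subtype.val hq'

end Exponential

section OpenOrbit
open scoped Topology
open NormedSpace

variable {L : Type*} [LieRing L] [LieAlgebra ℂ L] [FiniteDimensional ℂ L]

theorem eventually_exists_lieEquiv (Z Y W : Submodule ℂ L) {s d : L}
    (hs : s ∈ W) (hd : d ∈ W) (hZW : ∀ z ∈ Z, ∀ w ∈ W, ⁅z, w⁆ ∈ W) (hYW : Y ≤ W)
    (hsurj : ∀ w ∈ W, ∃ z ∈ Z, ∃ y ∈ Y, ⁅z, s⁆ + y = w) :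
    ∀ᶠ t in 𝓝 (0 : ℂ), ∃ g : L ≃ₗ⁅ℂ⁆ L, (∃ y ∈ Y, g (s + y) = s + t • d) ∧
      ∀ x, (∀ z ∈ Z, ⁅z, x⁆ = 0) → g x = x := by
  let φ : L ≃ₗ[ℂ] (Fin (Module.finrank ℂ L) → ℂ) := (Module.finBasis ℂ L).equivFun
  let : NormedAddCommGroup L := NormedAddCommGroup.induced L _ φ φ.injective
  let : NormedSpace ℂ L := NormedSpace.induced ℂ L _ φ
  let β : L →L[ℂ] L →L[ℂ] L := LinearMap.toContinuousLinearMap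
    ((LinearMap.toContinuousLinearMap : (L →ₗ[ℂ] L) ≃ₗ[ℂ] (L →L[ℂ] L)).toLinearMap ∘ₗ
      (ad ℂ L : L →ₗ[ℂ] Module.End ℂ L))
  have hβ : ∀ x y, β x y = ⁅x, y⁆ := fun x y => rfl
  have hexp : ∀ z x y, exp (β z) ⁅x, y⁆ = ⁅exp (β z) x, exp (β z) y⁆ := fun z x y =>
    exp_apply_bilinear β (β z) (fun x y => by simp only [hβ]; exact leibniz_lie z x y) x y
  have hinv : ∀ z x, exp (β z) (exp (β (-z)) x) = x := fun z x => by
    rw [map_neg]; exact exp_apply_exp_neg_apply (β z) x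
  filter_upwards [eventually_exists_exp_apply_eq β Z Y W hs hd hZW hYW hsurj] with t
    ⟨z, hz, y, hy, h⟩
  let g : L ≃ₗ⁅ℂ⁆ L :=
    { toFun := fun x => exp (β z) x
      map_add' := (exp (β z)).map_add
      map_smul' := (exp (β z)).map_smul
      map_lie' := hexp z _ _
      invFun := fun x => exp (β (-z)) x
      left_inv := fun x => by simpa using hinv (-z) x
      right_inv := hinv z }
  exact ⟨g, ⟨y, hy, h⟩, fun x hx => exp_apply_eq_self (hx z hz)⟩

end OpenOrbit

section Regular
open scoped Topology

theorem finite_setOf_eval_add_smul_eq_zero {ι : Type*} (p : MvPolynomial ι ℂ) (a d : ι → ℂ)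
    {t₀ : ℂ} (h : MvPolynomial.eval (a + t₀ • d) p ≠ 0) :
    {t : ℂ | MvPolynomial.eval (a + t • d) p = 0}.Finite := by
  let q : Polynomial ℂ :=
    MvPolynomial.aeval (fun i => Polynomial.C (a i) + Polynomial.X * Polynomial.C (d i)) p
  have hq : ∀ t, q.eval t = MvPolynomial.eval (a + t • d) p := by
    intro t
    have h1 : (Polynomial.aeval t) q = MvPolynomial.aeval (a + t • d) p := by
      simp only [q]
      rw [MvPolynomial.aeval_def, ← MvPolynomial.aeval_def, ← AlgHom.comp_apply]
      congr 1
      ext i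
      simp
      ring
    simpa [Polynomial.aeval_def, MvPolynomial.aeval_def] using h1
  have hq0 : q ≠ 0 := by
    rintro h0
    apply h
    rw [← hq, h0, Polynomial.eval_zero]
  refine (q.roots.toFinset.finite_toSet).subset fun t ht => ?_
  simp only [Finset.mem_coe, Multiset.mem_toFinset, Polynomial.mem_roots hq0]
  exact (hq t).trans ht

variable {L : Type*} [LieRing L] [LieAlgebra ℂ L] [FiniteDimensional ℂ L]

theorem finite_setOf_not_isRegular (a d : L) {t₀ : ℂ} (h : IsRegular ℂ (a + t₀ • d)) :
    {t : ℂ | ¬ IsRegular ℂ (a + t • d)}.Finite := by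
  classical
  let b := Module.finBasis ℂ L
  have key : ∀ t : ℂ, IsRegular ℂ (a + t • d) ↔
      MvPolynomial.eval (⇑(b.repr a) + t • ⇑(b.repr d))
      ((LinearMap.polyCharpoly (ad ℂ L : L →ₗ[ℂ] Module.End ℂ L) b).coeff (rank ℂ L)) ≠ 0 := by
    intro t
    rw [isRegular_iff_coeff_polyCharpoly_rank_ne_zero ℂ b, map_add, map_smul]
    rfl
  simp only [key, not_not]
  exact finite_setOf_eval_add_smul_eq_zero _ _ _ ((key t₀).1 h)

theorem isRegular_lieEquiv_apply (g : L ≃ₗ⁅ℂ⁆ L) {x : L} : IsRegular ℂ (g x) ↔ IsRegular ℂ x := by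
  have : ad ℂ L (g x) = g.toLinearEquiv.conj (ad ℂ L x) := by
    ext y
    have h : g ⁅x, g.symm y⁆ = ⁅g x, y⁆ := by rw [LieEquiv.map_lie, LieEquiv.apply_symm_apply]
    exact h.symm
  rw [isRegular_def, isRegular_def, this, LinearEquiv.charpoly_conj]

theorem isCartanSubalgebra_engel_of_isRegular {x : L} (hx : IsRegular ℂ x) :
    (LieSubalgebra.engel ℂ x).IsCartanSubalgebra := by
  refine ⟨?_, LieSubalgebra.normalizer_engel _ _⟩
  apply LieSubalgebra.isNilpotent_of_forall_le_engel
  intro y hy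
  set Ex : {LieSubalgebra.engel ℂ z | z ∈ LieSubalgebra.engel ℂ x} :=
    ⟨LieSubalgebra.engel ℂ x, x, LieSubalgebra.self_mem_engel _ _, rfl⟩
  suffices IsBot Ex from @this ⟨LieSubalgebra.engel ℂ y, y, hy, rfl⟩
  apply engel_isBot_of_isMin (Cardinal.natCast_le_aleph0.trans <|
    Cardinal.infinite_iff.mp inferInstance) (LieSubalgebra.engel ℂ x) Ex le_rfl
  rintro ⟨_, y, hy, rfl⟩ hyx
  suffices Module.finrank ℂ (LieSubalgebra.engel ℂ x) ≤
      Module.finrank ℂ (LieSubalgebra.engel ℂ y) by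
    suffices LieSubalgebra.engel ℂ y = LieSubalgebra.engel ℂ x from this.ge
    apply LieSubalgebra.toSubmodule_injective
    exact Submodule.eq_of_le_of_finrank_le hyx this
  rw [(isRegular_iff_finrank_engel_eq_rank ℂ x).mp hx]
  apply rank_le_finrank_engel

variable [IsKilling ℂ L]

theorem isSemisimple_ad_of_isRegular {x : L} (hx : IsRegular ℂ x) : (ad ℂ L x).IsSemisimple := by
  have := isCartanSubalgebra_engel_of_isRegular hx
  exact LieAlgebra.IsKilling.isSemisimple_ad_of_mem_isCartanSubalgebra
    (H := LieSubalgebra.engel ℂ x) (LieSubalgebra.self_mem_engel ℂ x)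

omit [FiniteDimensional ℂ L] [IsKilling ℂ L] in
theorem mem_engel_iff_lie_eq_zero {x : L} (hx : (ad ℂ L x).IsSemisimple) (y : L) :
    y ∈ LieSubalgebra.engel ℂ x ↔ ⁅x, y⁆ = 0 := by
  rw [LieSubalgebra.mem_engel_iff]
  constructor
  · rintro ⟨n, hn⟩
    have h : y ∈ (ad ℂ L x).maxGenEigenspace 0 := by
      rw [Module.End.mem_maxGenEigenspace]
      exact ⟨n, by simpa using hn⟩
    rw [hx.isFinitelySemisimple.maxGenEigenspace_eq_eigenspace, mem_eigenspace_iff,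
      zero_smul] at h
    exact h
  · intro h
    exact ⟨1, by simpa using h⟩

theorem lie_eq_zero_of_isRegular {x : L} (hx : IsRegular ℂ x) {a b : L} (ha : ⁅x, a⁆ = 0)
    (hb : ⁅x, b⁆ = 0) : ⁅a, b⁆ = 0 := by
  have := isCartanSubalgebra_engel_of_isRegular hx
  have hs := isSemisimple_ad_of_isRegular hx
  have h := trivial_lie_zero (LieSubalgebra.engel ℂ x) (LieSubalgebra.engel ℂ x)
    ⟨a, (mem_engel_iff_lie_eq_zero hs a).2 ha⟩ ⟨b, (mem_engel_iff_lie_eq_zero hs b).2 hb⟩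
  exact congrArg Subtype.val h

theorem lie_eq_zero_iff_of_isRegular {u v : L} (hu : IsRegular ℂ u) (hv : IsRegular ℂ v)
    (huv : ⁅u, v⁆ = 0) (x : L) : ⁅u, x⁆ = 0 ↔ ⁅v, x⁆ = 0 := by
  have hu' := isSemisimple_ad_of_isRegular hu
  have hv' := isSemisimple_ad_of_isRegular hv
  have hle : (LieSubalgebra.engel ℂ u).toSubmodule ≤ (LieSubalgebra.engel ℂ v).toSubmodule := by
    intro y hy
    exact (mem_engel_iff_lie_eq_zero hv' y).2
      (lie_eq_zero_of_isRegular hu huv ((mem_engel_iff_lie_eq_zero hu' y).1 hy))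
  have heq := Submodule.eq_of_le_of_finrank_eq hle
    (((isRegular_iff_finrank_engel_eq_rank ℂ u).1 hu).trans
      ((isRegular_iff_finrank_engel_eq_rank ℂ v).1 hv).symm)
  rw [← mem_engel_iff_lie_eq_zero hu', ← mem_engel_iff_lie_eq_zero hv']
  exact SetLike.ext_iff.1 heq x

omit [IsKilling ℂ L] in
theorem exists_lie_add_eq {x : L} (hx : (ad ℂ L x).IsSemisimple) (w : L) :
    ∃ z y : L, ⁅x, y⁆ = 0 ∧ ⁅z, x⁆ + y = w := by
  obtain ⟨q, hq, hc⟩ := (Module.End.isSemisimple_iff.1 hx) (LinearMap.ker (ad ℂ L x))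
    (fun v hv => by
      rw [Submodule.mem_comap, LinearMap.mem_ker, LinearMap.mem_ker.1 hv, map_zero])
  have hinj : Set.InjOn (ad ℂ L x) q := by
    intro a ha b hb hab
    have : a - b ∈ LinearMap.ker (ad ℂ L x) ⊓ q :=
      ⟨by rw [SetLike.mem_coe, LinearMap.mem_ker, map_sub, hab, sub_self], q.sub_mem ha hb⟩
    rw [hc.inf_eq_bot, Submodule.mem_bot] at this
    exact sub_eq_zero.1 this
  have hrange : q ≤ LinearMap.range (ad ℂ L x) := by
    have hm : ∀ a ∈ q, ad ℂ L x a ∈ q := hq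
    let r := (ad ℂ L x).restrict hm
    have hr : Function.Injective r := by
      intro a b hab
      exact Subtype.ext (hinj a.2 b.2 (congrArg Subtype.val hab))
    intro a ha
    obtain ⟨c, hc⟩ := (LinearMap.injective_iff_surjective.1 hr) ⟨a, ha⟩
    exact ⟨c, congrArg Subtype.val hc⟩
  have hw : w ∈ LinearMap.ker (ad ℂ L x) ⊔ q := hc.sup_eq_top ▸ Submodule.mem_top
  obtain ⟨y, hy, c, hcq, rfl⟩ := Submodule.mem_sup.1 hw
  obtain ⟨z, hz⟩ := hrange hcq
  refine ⟨-z, y, hy, ?_⟩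
  rw [neg_lie, lie_skew, add_comm]
  exact congrArg (y + ·) hz

omit [IsKilling ℂ L] in
theorem eventually_exists_lieEquiv_of_isSemisimple {x : L} (hx : (ad ℂ L x).IsSemisimple) (d : L) :
    ∀ᶠ t in 𝓝 (0 : ℂ), ∃ g : L ≃ₗ⁅ℂ⁆ L, ∃ y : L, ⁅x, y⁆ = 0 ∧ g (x + y) = x + t • d := by
  have h := eventually_exists_lieEquiv (L := L) ⊤ (LinearMap.ker (ad ℂ L x)) ⊤ (s := x) (d := d)
    trivial trivial (fun _ _ _ _ => trivial) le_top (fun w _ => by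
      obtain ⟨z, y, hy, h⟩ := exists_lie_add_eq hx w
      exact ⟨z, trivial, y, hy, h⟩)
  filter_upwards [h] with t ⟨g, ⟨y, hy, hg⟩, _⟩
  exact ⟨g, y, hy, hg⟩

omit [IsKilling ℂ L] in
theorem exists_isRegular_lie_eq_zero {x : L} (hx : (ad ℂ L x).IsSemisimple) :
    ∃ u : L, IsRegular ℂ u ∧ ⁅x, u⁆ = 0 := by
  obtain ⟨v, hv⟩ := exists_isRegular ℂ L
  have hfin := finite_setOf_not_isRegular x (v - x) (t₀ := 1) (by simpa using hv)
  have h0 : ∀ᶠ t in 𝓝[≠] (0 : ℂ), IsRegular ℂ (x + t • (v - x)) := by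
    have := (hfin.subset (Set.sdiff_subset (t := {0}))).isClosed.isOpen_compl.mem_nhds
      (x := (0 : ℂ)) (by simp)
    filter_upwards [nhdsWithin_le_nhds this, self_mem_nhdsWithin] with t ht ht0
    by_contra hcon
    exact ht ⟨hcon, ht0⟩
  obtain ⟨t, ⟨g, y, hy, hg⟩, ht⟩ := ((Filter.Eventually.filter_mono
    nhdsWithin_le_nhds (eventually_exists_lieEquiv_of_isSemisimple hx (v - x))).and h0).exists
  refine ⟨x + y, (isRegular_lieEquiv_apply g).1 (hg ▸ ht), ?_⟩
  rw [lie_add, lie_self, hy, add_zero]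

theorem preconnected_compl_of_finite {s : Set ℂ} (hs : s.Finite) : IsPreconnected sᶜ :=
  (hs.countable.isPathConnected_compl_of_one_lt_rank
    (by rw [Complex.rank_real_complex]; norm_num)).isConnected.isPreconnected

theorem exists_lieEquiv_of_isRegular {u v : L} (hu : IsRegular ℂ u) (hv : IsRegular ℂ v) :
    ∃ g : L ≃ₗ⁅ℂ⁆ L, ∀ x, ⁅u, x⁆ = 0 ↔ ⁅v, g x⁆ = 0 := by
  let a : ℂ → L := fun t => u + t • (v - u)
  have hfin : {t | ¬ IsRegular ℂ (a t)}.Finite :=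
    finite_setOf_not_isRegular u (v - u) (t₀ := 1) (by simpa using hv)
  have hpre := preconnected_compl_of_finite hfin
  have hmem : ∀ t, t ∈ {t | ¬ IsRegular ℂ (a t)}ᶜ ↔ IsRegular ℂ (a t) := by simp
  have h := hpre.induction₂
    (fun s t => ∃ g : L ≃ₗ⁅ℂ⁆ L, ∀ x, ⁅a s, x⁆ = 0 ↔ ⁅a t, g x⁆ = 0)
    (x := 0) (y := 1) ?_ ?_ ?_ ?_ ?_
  · simpa [a] using h
  · intro s hs
    rw [hmem] at hs
    have h1 := eventually_exists_lieEquiv_of_isSemisimple (isSemisimple_ad_of_isRegular hs) (v - u)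
    have h2 : Filter.Tendsto (fun t : ℂ => t - s) (𝓝 s) (𝓝 0) := by
      have : Continuous fun t : ℂ => t - s := by fun_prop
      simpa using this.tendsto s
    filter_upwards [nhdsWithin_le_nhds (h2.eventually h1), self_mem_nhdsWithin] with t
      ⟨g, y, hy, hg⟩ ht
    rw [hmem] at ht
    have ha : a s + (t - s) • (v - u) = a t := by simp only [a]; module
    rw [ha] at hg
    refine ⟨g, fun x => ?_⟩
    rw [lie_eq_zero_iff_of_isRegular hs ((isRegular_lieEquiv_apply g).1 (hg ▸ ht)) (by
      rw [lie_add, lie_self, hy, add_zero]) x, ← hg, ← LieEquiv.map_lie]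
    exact (EmbeddingLike.map_eq_zero_iff (f := g)).symm
  · rintro x y z - - - ⟨g, hg⟩ ⟨g', hg'⟩
    exact ⟨g.trans g', fun w => (hg w).trans (hg' _)⟩
  · rintro x y - - ⟨g, hg⟩
    exact ⟨g.symm, fun w => by rw [hg, LieEquiv.apply_symm_apply]⟩
  · simpa [hmem, a] using hu
  · simpa [hmem, a] using hv

theorem exists_lieEquiv_lie_eq_zero {h y : L} (hh : (ad ℂ L h).IsSemisimple)
    (hy : (ad ℂ L y).IsSemisimple) :
    ∃ g : L ≃ₗ⁅ℂ⁆ L, ⁅y, g h⁆ = 0 := by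
  obtain ⟨u, hu, hhu⟩ := exists_isRegular_lie_eq_zero hh
  obtain ⟨v, hv, hyv⟩ := exists_isRegular_lie_eq_zero hy
  obtain ⟨g, hg⟩ := exists_lieEquiv_of_isRegular hu hv
  have h1 : ⁅u, h⁆ = 0 := by rw [← lie_skew, hhu, neg_zero]
  have h2 : ⁅v, y⁆ = 0 := by rw [← lie_skew, hyv, neg_zero]
  exact ⟨g, lie_eq_zero_of_isRegular hv h2 ((hg h).1 h1)⟩

end Regular

section GradedOrbit
open scoped Topology

theorem finite_setOf_not_surjective_add_smul {V W : Type*} [AddCommGroup V] [Module ℂ V]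
    [FiniteDimensional ℂ V] [AddCommGroup W] [Module ℂ W] {f : V →ₗ[ℂ] W}
    (hf : Function.Bijective f) (g : V →ₗ[ℂ] W) :
    {t : ℂ | ¬ Function.Surjective (f + t • g)}.Finite := by
  let φ : V ≃ₗ[ℂ] W := LinearEquiv.ofBijective f hf
  let B : Module.End ℂ V := φ.symm.toLinearMap ∘ₗ g
  refine ((Module.End.finite_hasEigenvalue B).image fun μ => -μ⁻¹).subset fun t ht => ?_
  have hcomp : ∀ x, φ (x + t • B x) = (f + t • g) x := fun x => by
    have : φ (φ.symm (g x)) = g x := φ.apply_symm_apply _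
    rw [map_add, map_smul]
    exact congrArg (fun w => f x + t • w) this
  have hinj : ¬ Function.Injective (1 + t • B : Module.End ℂ V) := fun hi => ht fun w => by
    obtain ⟨x, hx⟩ := LinearMap.injective_iff_surjective.1 hi (φ.symm w)
    refine ⟨x, ?_⟩
    rw [← hcomp, show x + t • B x = φ.symm w from hx, φ.apply_symm_apply]
  rw [← LinearMap.ker_eq_bot, Submodule.eq_bot_iff] at hinj
  push Not at hinj
  obtain ⟨x, hx, hx0⟩ := hinj
  have hx' : x + t • B x = 0 := hx
  have ht0 : t ≠ 0 := by
    rintro rfl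
    exact hx0 (by simpa using hx')
  refine ⟨-t⁻¹, hasEigenvalue_of_hasEigenvector (x := x) ⟨?_, hx0⟩, by simp⟩
  rw [mem_eigenspace_iff]
  have : B x = t⁻¹ • (t • B x) := by rw [smul_smul, inv_mul_cancel₀ ht0, one_smul]
  rw [this, eq_neg_of_add_eq_zero_right hx', smul_neg, neg_smul]

variable {L : Type*} [LieRing L] [LieAlgebra ℂ L] [FiniteDimensional ℂ L]

theorem exists_lieEquiv_apply_eq_of_surjective {h e e' : L} (he : ⁅h, e⁆ = (2 : ℂ) • e)
    (he' : ⁅h, e'⁆ = (2 : ℂ) • e') (hinj : ∀ x : L, ⁅h, x⁆ = 0 → ⁅e, x⁆ = 0 → x = 0)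
    (hsurj : ∀ w : L, ⁅h, w⁆ = (2 : ℂ) • w → ∃ x : L, ⁅h, x⁆ = 0 ∧ ⁅e, x⁆ = w)
    (hsurj' : ∀ w : L, ⁅h, w⁆ = (2 : ℂ) • w → ∃ x : L, ⁅h, x⁆ = 0 ∧ ⁅e', x⁆ = w) :
    ∃ g : L ≃ₗ⁅ℂ⁆ L, g h = h ∧ g e = e' := by
  let K : Submodule ℂ L := (ad ℂ L h).eigenspace 0
  let W : Submodule ℂ L := (ad ℂ L h).eigenspace 2
  have hK : ∀ x, x ∈ K ↔ ⁅h, x⁆ = 0 := fun x => by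
    rw [mem_eigenspace_iff, zero_smul]; rfl
  have hW : ∀ x, x ∈ W ↔ ⁅h, x⁆ = (2 : ℂ) • x := fun x => mem_eigenspace_iff
  have hWK : ∀ w ∈ W, ∀ x ∈ K, ad ℂ L w x ∈ W := fun w hw x hx => by
    rw [hW] at hw ⊢
    rw [hK] at hx
    rw [ad_apply, leibniz_lie, hx, lie_zero, add_zero, hw, smul_lie]
  have hKW : ∀ x ∈ K, ∀ w ∈ W, ⁅x, w⁆ ∈ W := fun x hx w hw => by
    rw [← lie_skew]
    exact W.neg_mem (hWK w hw x hx)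
  let ρ : W → (K →ₗ[ℂ] W) := fun w => (ad ℂ L (w : L)).restrict (hWK w w.2)
  let a : ℂ → W := fun t => ⟨e, (hW e).2 he⟩ + t • (⟨e', (hW e').2 he'⟩ - ⟨e, (hW e).2 he⟩)
  have ha : ∀ t, (a t : L) = e + t • (e' - e) := fun t => rfl
  have hbij : Function.Bijective (ρ (a 0)) := by
    have ha0 : (a 0 : L) = e := by simp [ha]
    constructor
    · rw [← LinearMap.ker_eq_bot, Submodule.eq_bot_iff]
      intro x hx
      refine Subtype.ext (hinj x ((hK x).1 x.2) ?_)
      have := congrArg Subtype.val (LinearMap.mem_ker.1 hx)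
      rwa [← ha0]
    · rintro ⟨w, hw⟩
      obtain ⟨x, hx, hxw⟩ := hsurj w ((hW w).1 hw)
      exact ⟨⟨x, (hK x).2 hx⟩, Subtype.ext ((congrArg (⁅·, x⁆) ha0).trans hxw)⟩
  have hfin : {t : ℂ | ¬ Function.Surjective (ρ (a t))}.Finite := by
    refine (finite_setOf_not_surjective_add_smul hbij
      (ρ (⟨e', (hW e').2 he'⟩ - ⟨e, (hW e).2 he⟩))).subset fun t ht => ?_
    have heq : ρ (a t) = ρ (a 0) + t • ρ (⟨e', (hW e').2 he'⟩ - ⟨e, (hW e).2 he⟩) := by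
      ext x
      simp [ρ, a]
    rw [Set.mem_ofPred_eq, heq] at ht
    exact ht
  have hpre := preconnected_compl_of_finite hfin
  have hmem : ∀ t, t ∈ {t : ℂ | ¬ Function.Surjective (ρ (a t))}ᶜ ↔
      Function.Surjective (ρ (a t)) := by simp
  have hcon := hpre.induction₂
    (fun s t => ∃ g : L ≃ₗ⁅ℂ⁆ L, g h = h ∧ g (a s) = a t) (x := 0) (y := 1) ?_ ?_ ?_ ?_ ?_
  · simpa [ha] using hcon
  · intro s hs
    rw [hmem] at hs
    have h1 := eventually_exists_lieEquiv K ⊥ W (s := a s) (d := e' - e) (a s).2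
      (W.sub_mem ((hW e').2 he') ((hW e).2 he)) hKW bot_le (fun w hw => by
        obtain ⟨x, hx⟩ := hs ⟨w, hw⟩
        refine ⟨-x, K.neg_mem x.2, 0, zero_mem _, ?_⟩
        rw [add_zero, neg_lie, lie_skew]
        exact congrArg Subtype.val hx)
    have h2 : Filter.Tendsto (fun t : ℂ => t - s) (𝓝 s) (𝓝 0) := by
      have : Continuous fun t : ℂ => t - s := by fun_prop
      simpa using this.tendsto s
    filter_upwards [nhdsWithin_le_nhds (h2.eventually h1)] with t ⟨g, ⟨y, hy, hg⟩, hfix⟩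
    rw [(Submodule.mem_bot ℂ).1 hy, add_zero] at hg
    refine ⟨g, hfix h fun z hz => ?_, ?_⟩
    · rw [← lie_skew, (hK z).1 hz, neg_zero]
    · rw [hg, ha, ha]
      module
  · rintro x y z - - - ⟨g, hgh, hg⟩ ⟨g', hgh', hg'⟩
    exact ⟨g.trans g', by simp [hgh, hgh'], by simp [hg, hg']⟩
  · rintro x y - - ⟨g, hgh, hg⟩
    exact ⟨g.symm, by rw [← hgh, LieEquiv.symm_apply_apply, hgh],
      by rw [← hg, LieEquiv.symm_apply_apply]⟩
  · rw [hmem]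
    exact hbij.2
  · rw [hmem]
    rintro ⟨w, hw⟩
    obtain ⟨x, hx, hxw⟩ := hsurj' w ((hW w).1 hw)
    have ha1 : (a 1 : L) = e' := by simp [ha]
    exact ⟨⟨x, (hK x).2 hx⟩, Subtype.ext ((congrArg (⁅·, x⁆) ha1).trans hxw)⟩

end GradedOrbit

section SparseMatrix

/-- An integer matrix with finitely many nonzero entries, written as a formal sum of
`(row, column, coefficient)`. -/
abbrev SparseMat := List (ℕ × ℕ × ℤ)

/-- The endomorphism of `ℂ^(ℕ)` given by a matrix unit. -/
noncomputable def matrixUnit (r c : ℕ) : Module.End ℂ (ℕ →₀ ℂ) :=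
  Finsupp.lsingle r ∘ₗ Finsupp.lapply c

theorem matrixUnit_apply (r c : ℕ) (x : ℕ →₀ ℂ) (i : ℕ) :
    matrixUnit r c x i = if r = i then x c else 0 := by
  simp [matrixUnit, Finsupp.single_apply]

theorem matrixUnit_mul (r c r' c' : ℕ) :
    matrixUnit r c * matrixUnit r' c' = if c = r' then matrixUnit r c' else 0 := by
  refine LinearMap.ext fun x => Finsupp.ext fun i => ?_
  rw [Module.End.mul_apply, matrixUnit_apply, matrixUnit_apply]
  split_ifs <;> simp_all [matrixUnit_apply]

theorem nat_beq_eq (a b : ℕ) : a.beq b = decide (a = b) := by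
  rw [Bool.eq_iff_iff, Nat.beq_eq, decide_eq_true_eq]

namespace SparseMat

/-- The coefficient of a sparse matrix at a given position. -/
def coeff (l : SparseMat) (i j : ℕ) : ℤ :=
  l.foldr (fun p a => bif p.1.beq i && p.2.1.beq j then p.2.2 + a else a) 0

/-- The endomorphism of `ℂ^(ℕ)` represented by a sparse matrix. -/
noncomputable def toEnd (l : SparseMat) : Module.End ℂ (ℕ →₀ ℂ) :=
  (l.map fun p => (p.2.2 : ℂ) • matrixUnit p.1 p.2.1).sum

/-- Multiplication of a sparse matrix by a scalar. -/
def scale (n : ℤ) (l : SparseMat) : SparseMat := l.map fun p => (p.1, p.2.1, n * p.2.2)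

/-- The product of a matrix unit with a sparse matrix. -/
def rowMul (r c : ℕ) (v : ℤ) (l : SparseMat) : SparseMat :=
  l.foldr (fun p a => bif c.beq p.1 then (r, p.2.1, v * p.2.2) :: a else a) []

/-- The product of two sparse matrices. -/
def mul (l l' : SparseMat) : SparseMat :=
  l.foldr (fun p a => rowMul p.1 p.2.1 p.2.2 l' ++ a) []

/-- The commutator of two sparse matrices. -/
def comm (k l : SparseMat) : SparseMat := mul k l ++ scale (-1) (mul l k)

/-- The transpose of a sparse matrix. -/
def transpose (l : SparseMat) : SparseMat := l.map fun p => (p.2.1, p.1, p.2.2)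

/-- Whether all coefficients of a sparse matrix vanish. -/
noncomputable def isZero (l : SparseMat) : Bool := l.all fun p => (coeff l p.1 p.2.1).beq' 0

theorem toEnd_cons (p : ℕ × ℕ × ℤ) (l : SparseMat) :
    toEnd (p :: l) = (p.2.2 : ℂ) • matrixUnit p.1 p.2.1 + toEnd l := by
  simp [toEnd]

theorem toEnd_append (l l' : SparseMat) : toEnd (l ++ l') = toEnd l + toEnd l' := by
  simp [toEnd]

theorem toEnd_single_apply (l : SparseMat) (i j : ℕ) :
    toEnd l (Finsupp.single j 1) i = coeff l i j := by
  induction l with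
  | nil => simp [toEnd, coeff]
  | cons p l ih =>
    rw [toEnd_cons, LinearMap.add_apply, Finsupp.add_apply, ih]
    simp only [coeff, List.foldr_cons, LinearMap.smul_apply, Finsupp.smul_apply,
      matrixUnit_apply, Finsupp.single_apply, nat_beq_eq]
    by_cases h₁ : p.1 = i <;> by_cases h₂ : j = p.2.1 <;> simp [h₁, h₂, eq_comm]

theorem toEnd_scale (n : ℤ) (l : SparseMat) : toEnd (scale n l) = (n : ℂ) • toEnd l := by
  induction l with
  | nil => simp [toEnd, scale]
  | cons p l ih =>
    rw [toEnd_cons, smul_add, ← ih, smul_smul]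
    simp [scale, toEnd]

theorem toEnd_rowMul (r c : ℕ) (v : ℤ) (l : SparseMat) :
    toEnd (rowMul r c v l) = (v : ℂ) • matrixUnit r c * toEnd l := by
  induction l with
  | nil => simp [toEnd, rowMul]
  | cons p l ih =>
    rw [toEnd_cons, mul_add, ← ih, smul_mul_smul_comm, matrixUnit_mul]
    simp only [rowMul, List.foldr_cons, nat_beq_eq]
    by_cases h : c = p.1 <;> simp [h, toEnd_cons]

theorem toEnd_mul (l l' : SparseMat) : toEnd (mul l l') = toEnd l * toEnd l' := by
  induction l with
  | nil => simp [toEnd, mul]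
  | cons p l ih =>
    rw [toEnd_cons, add_mul, ← ih, ← toEnd_rowMul, ← toEnd_append]
    rfl

theorem toEnd_comm (l l' : SparseMat) : toEnd (comm l l') = ⁅toEnd l, toEnd l'⁆ := by
  rw [comm, toEnd_append, toEnd_scale, toEnd_mul, toEnd_mul, Ring.lie_def,
    sub_eq_add_neg, Int.cast_neg, Int.cast_one]
  module

theorem coeff_eq_zero_of_forall_ne {l : SparseMat} {i j : ℕ}
    (h : ∀ p ∈ l, ¬(p.1 = i ∧ p.2.1 = j)) : coeff l i j = 0 := by
  induction l with
  | nil => rfl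
  | cons p l ih =>
    have h₁ := h _ List.mem_cons_self
    have h₂ := ih fun q hq => h q (List.mem_cons_of_mem _ hq)
    simp only [coeff, List.foldr_cons, nat_beq_eq] at h₂ ⊢
    rw [h₂, ← Bool.decide_and, decide_eq_false h₁, cond_false]

theorem toEnd_eq_zero {l : SparseMat} (h : isZero l = true) : toEnd l = 0 := by
  refine Finsupp.lhom_ext' fun j => LinearMap.ext_ring <| Finsupp.ext fun i => ?_
  have : coeff l i j = 0 := by
    by_cases hp : ∃ p ∈ l, p.1 = i ∧ p.2.1 = j
    · obtain ⟨p, hp, rfl, rfl⟩ := hp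
      exact (Int.beq'_eq _ _).mp (List.all_eq_true.1 h p hp)
    · push Not at hp
      exact coeff_eq_zero_of_forall_ne fun p hpl hpij => hp p hpl hpij.1 hpij.2
  simpa [this] using toEnd_single_apply l i j

/-- The sum of the coefficients of a sparse matrix against the entries of another one. -/
def pair (d l : SparseMat) : ℤ := d.foldr (fun p a => p.2.2 * coeff l p.1 p.2.1 + a) 0

/-- The linear functional on endomorphisms given by a sparse matrix. -/
noncomputable def functional (d : SparseMat) : Module.End ℂ (ℕ →₀ ℂ) →ₗ[ℂ] ℂ :=
  (d.map fun p => (p.2.2 : ℂ) •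
    (Finsupp.lapply p.1 ∘ₗ LinearMap.applyₗ (Finsupp.single p.2.1 (1 : ℂ)))).sum

theorem functional_toEnd (d l : SparseMat) : functional d (toEnd l) = pair d l := by
  induction d with
  | nil => simp [functional, pair]
  | cons p d ih =>
    have : functional (p :: d) = (p.2.2 : ℂ) • (Finsupp.lapply p.1 ∘ₗ
        LinearMap.applyₗ (Finsupp.single p.2.1 (1 : ℂ))) + functional d := by
      simp [functional]
    rw [this, LinearMap.add_apply, ih]
    simp [toEnd_single_apply, pair]

end SparseMat

end SparseMatrix

/-- Matrices of the positive root vectors of `E₆` in the 27-dimensional representation. -/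
def posRootMat : List SparseMat :=
  [[(0, 1, 1), (10, 12, 1), (13, 15, 1), (16, 17, 1), (18, 19, 1), (20, 21, 1)],
   [(3, 4, 1), (5, 6, 1), (7, 9, 1), (18, 20, 1), (19, 21, 1), (22, 23, 1)],
   [(1, 2, 1), (8, 10, 1), (11, 13, 1), (14, 16, 1), (19, 22, 1), (21, 23, 1)],
   [(2, 3, 1), (6, 8, 1), (9, 11, 1), (16, 18, 1), (17, 19, 1), (23, 24, 1)],
   [(3, 5, 1), (4, 6, 1), (11, 14, 1), (13, 16, 1), (15, 17, 1), (24, 25, 1)],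
   [(5, 7, 1), (6, 9, 1), (8, 11, 1), (10, 13, 1), (12, 15, 1), (25, 26, 1)],
   [(0, 2, -1), (8, 12, 1), (11, 15, 1), (14, 17, 1), (18, 22, -1), (20, 23, -1)],
   [(2, 4, 1), (5, 8, -1), (7, 11, -1), (16, 20, 1), (17, 21, 1), (22, 24, -1)],
   [(1, 3, -1), (6, 10, 1), (9, 13, 1), (14, 18, -1), (17, 22, 1), (21, 24, -1)],
   [(2, 5, -1), (4, 8, 1), (9, 14, -1), (13, 18, 1), (15, 19, 1), (23, 25, -1)],
   [(3, 7, -1), (4, 9, -1), (8, 14, 1), (10, 16, 1), (12, 17, 1), (24, 26, -1)],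
   [(0, 3, 1), (6, 12, 1), (9, 15, 1), (14, 19, -1), (16, 22, -1), (20, 24, 1)],
   [(1, 4, 1), (5, 10, 1), (7, 13, 1), (14, 20, 1), (17, 23, -1), (19, 24, -1)],
   [(2, 6, -1), (3, 8, -1), (7, 14, 1), (13, 20, 1), (15, 21, 1), (22, 25, 1)],
   [(1, 5, 1), (4, 10, 1), (9, 16, -1), (11, 18, -1), (15, 22, 1), (21, 25, 1)],
   [(2, 7, 1), (4, 11, -1), (6, 14, -1), (10, 18, 1), (12, 19, 1), (23, 26, 1)],
   [(0, 4, -1), (5, 12, 1), (7, 15, 1), (14, 21, 1), (16, 23, 1), (18, 24, 1)],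
   [(0, 5, -1), (4, 12, 1), (9, 17, -1), (11, 19, -1), (13, 22, -1), (20, 25, -1)],
   [(1, 6, -1), (3, 10, 1), (7, 16, -1), (11, 20, 1), (15, 23, -1), (19, 25, 1)],
   [(2, 9, 1), (3, 11, 1), (5, 14, 1), (10, 20, 1), (12, 21, 1), (22, 26, -1)],
   [(1, 7, -1), (4, 13, -1), (6, 16, -1), (8, 18, -1), (12, 22, 1), (21, 26, -1)],
   [(0, 6, 1), (3, 12, 1), (7, 17, -1), (11, 21, 1), (13, 23, 1), (18, 25, -1)],
   [(0, 7, 1), (4, 15, -1), (6, 17, -1), (8, 19, -1), (10, 22, -1), (20, 26, 1)],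
   [(1, 8, 1), (2, 10, 1), (7, 18, 1), (9, 20, 1), (15, 24, 1), (17, 25, 1)],
   [(1, 9, 1), (3, 13, -1), (5, 16, -1), (8, 20, 1), (12, 23, -1), (19, 26, -1)],
   [(0, 8, -1), (2, 12, 1), (7, 19, 1), (9, 21, 1), (13, 24, -1), (16, 25, -1)],
   [(0, 9, -1), (3, 15, -1), (5, 17, -1), (8, 21, 1), (10, 23, 1), (18, 26, 1)],
   [(1, 11, -1), (2, 13, -1), (5, 18, 1), (6, 20, 1), (12, 24, 1), (17, 26, -1)],
   [(0, 10, 1), (1, 12, 1), (7, 22, -1), (9, 23, -1), (11, 24, -1), (14, 25, -1)],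
   [(0, 11, 1), (2, 15, -1), (5, 19, 1), (6, 21, 1), (10, 24, -1), (16, 26, 1)],
   [(1, 14, 1), (2, 16, 1), (3, 18, 1), (4, 20, 1), (12, 25, -1), (15, 26, -1)],
   [(0, 13, -1), (1, 15, -1), (5, 22, -1), (6, 23, -1), (8, 24, -1), (14, 26, 1)],
   [(0, 14, -1), (2, 17, 1), (3, 19, 1), (4, 21, 1), (10, 25, 1), (13, 26, 1)],
   [(0, 16, 1), (1, 17, 1), (3, 22, -1), (4, 23, -1), (8, 25, 1), (11, 26, 1)],
   [(0, 18, -1), (1, 19, -1), (2, 22, -1), (4, 24, 1), (6, 25, 1), (9, 26, 1)],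
   [(0, 20, 1), (1, 21, 1), (2, 23, 1), (3, 24, 1), (5, 25, 1), (7, 26, 1)]]

/-- The positive roots of `E₆`: the decimal digits are the coefficients of the simple roots. -/
def posRoot : List ℕ :=
  [100000, 10000, 1000, 100, 10, 1, 101000, 10100, 1100,
   110, 11, 101100, 11100, 10110, 1110, 111, 111100, 101110,
   11110, 10111, 1111, 111110, 101111, 11210, 11111, 111210, 111111,
   11211, 112210, 111211, 11221, 112211, 111221, 112221, 112321, 122321]

/-- Each positive root of height at least two, as a simple root plus an earlier positive root. -/
def posRootParent : List (ℕ × ℕ) :=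
  [(2, 0), (3, 1), (3, 2), (4, 3), (5, 4), (3, 6), (2, 7), (4, 7), (4, 8), (5, 9),
   (1, 11), (4, 11), (4, 12), (5, 13), (5, 14), (4, 16), (5, 17), (3, 18), (5, 18), (3, 21),
   (5, 21), (5, 23), (2, 25), (5, 25), (4, 27), (5, 28), (4, 29), (4, 31), (3, 33), (1, 34)]

section RootMatrices

/-- The matrices of a basis of `E₆` in the 27-dimensional representation: six simple coroots,
36 positive root vectors, 36 negative root vectors. -/
def basisMat (k : ℕ) : SparseMat :=
  bif k.blt 6 then (posRootMat.getD k []).comm (posRootMat.getD k []).transpose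
  else bif k.blt 42 then posRootMat.getD (k - 6) []
  else (posRootMat.getD (k - 42) []).transpose

/-- The decimal digits of a natural number with six digits. -/
def decimalDigit (n i : ℕ) : ℕ := n / 10 ^ (5 - i) % 10

/-- The coefficient of the `i`-th simple root in the weight of the `k`-th basis vector. -/
def basisCoeff (k i : ℕ) : ℤ :=
  bif k.blt 6 then 0
  else bif k.blt 42 then decimalDigit (posRoot.getD (k - 6) 0) i
  else -decimalDigit (posRoot.getD (k - 42) 0) i

/-- The Cartan matrix of type `E₆`. -/
def cartanTable : List (List ℤ) :=
  [[2, 0, -1, 0, 0, 0], [0, 2, 0, -1, 0, 0], [-1, 0, 2, -1, 0, 0], [0, -1, -1, 2, -1, 0],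
   [0, 0, 0, -1, 2, -1], [0, 0, 0, 0, -1, 2]]

/-- An entry of the Cartan matrix of type `E₆`. -/
def cartanEntry (i j : ℕ) : ℤ := (cartanTable.getD i []).getD j 0

/-- The value of the `k`-th weight on the `i`-th simple coroot. -/
def corootValue (i k : ℕ) : ℤ :=
  cartanEntry i 0 * basisCoeff k 0 + cartanEntry i 1 * basisCoeff k 1 +
    cartanEntry i 2 * basisCoeff k 2 + cartanEntry i 3 * basisCoeff k 3 +
    cartanEntry i 4 * basisCoeff k 4 + cartanEntry i 5 * basisCoeff k 5

/-- Functionals on endomorphisms that are dual to the matrices `basisMat`. -/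
def dualMat (k : ℕ) : SparseMat :=
  bif k.blt 6 then
    [[(0, 0, 1)], [(0, 0, 1), (20, 20, -1)], [(0, 0, 1), (1, 1, 1)],
     [(0, 0, 1), (1, 1, 1), (2, 2, 1)], [(25, 25, -1), (26, 26, -1)],
     [(26, 26, -1)]].getD k []
  else (basisMat k).take 1

/-- The position of the basis vector that is proportional to the bracket of the `i`-th simple root
vector with the `k`-th basis vector, if that bracket is not zero. -/
def raiseIdx (i k : ℕ) : ℕ :=
  bif k.blt 6 then 6 + i
  else bif k.blt 42 then 6 + posRoot.idxOf (posRoot.getD (k - 6) 0 + 10 ^ (5 - i))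
  else bif k.beq (42 + i) then i
  else 42 + posRoot.idxOf (posRoot.getD (k - 42) 0 - 10 ^ (5 - i))

/-- Exchange of the positive and the negative root vectors. -/
def oppIdx (k : ℕ) : ℕ := bif k.blt 6 then k else bif k.blt 42 then k + 36 else k - 36

/-- Whether the first matrix is an integral multiple of the second one. -/
noncomputable def SparseMat.isMultiple (l d b : SparseMat) : Bool :=
  (l ++ b.scale (-d.pair l)).isZero

theorem pair_dualMat_basisMat : ((List.range 78).all fun k => (List.range 78).all fun l =>
    ((dualMat k).pair (basisMat l)).beq' (bif k.beq l then 1 else 0)) = true := by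
  decide +kernel

theorem isMultiple_comm_pos : ((List.range 6).all fun i => (List.range 78).all fun k =>
    ((basisMat (6 + i)).comm (basisMat k)).isMultiple
      (dualMat (raiseIdx i k)) (basisMat (raiseIdx i k))) = true := by
  decide +kernel

theorem isMultiple_comm_neg : ((List.range 6).all fun i => (List.range 78).all fun k =>
    ((basisMat (42 + i)).comm (basisMat k)).isMultiple
      (dualMat (oppIdx (raiseIdx i (oppIdx k)))) (basisMat (oppIdx (raiseIdx i (oppIdx k))))) =
      true := by
  decide +kernel

theorem isZero_comm_coroot : ((List.range 6).all fun i => (List.range 78).all fun k =>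
    ((basisMat i).comm (basisMat k) ++ (basisMat k).scale (-corootValue i k)).isZero) = true := by
  decide +kernel

theorem isZero_comm_pos_neg : ((List.range 6).all fun i => (List.range 6).all fun j =>
    ((basisMat (6 + i)).comm (basisMat (42 + j)) ++
      bif i.beq j then (basisMat i).scale (-1) else []).isZero) = true := by
  decide +kernel

end RootMatrices

section Chevalley

attribute [local instance] LieRing.ofAssociativeRing

/-- The matrix on the left of the Serre relation between two simple root vectors. -/
def serreMat (s i j : ℕ) : SparseMat :=
  bif (cartanEntry i j == -1) then
    (basisMat (s + i)).comm ((basisMat (s + i)).comm (basisMat (s + j)))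
  else (basisMat (s + i)).comm (basisMat (s + j))

theorem isZero_serreMat : ([6, 42].all fun s => (List.range 6).all fun i => (List.range 6).all
    fun j => (serreMat s i j).isZero) = true := by
  decide +kernel

theorem isZero_posRootParent : ((List.range 30).all fun n =>
    ((posRootParent.getD n (0, 0)).1.blt 6 && (posRootParent.getD n (0, 0)).2.blt (6 + n)) &&
    (((basisMat (6 + (posRootParent.getD n (0, 0)).1)).comm
      (basisMat (6 + (posRootParent.getD n (0, 0)).2)) ++
        (basisMat (12 + n)).scale (-1)).isZero &&
    ((basisMat (42 + (posRootParent.getD n (0, 0)).1)).comm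
      (basisMat (42 + (posRootParent.getD n (0, 0)).2)) ++
        (basisMat (48 + n)).scale 1).isZero)) = true := by
  decide +kernel

/-- The endomorphisms given by the matrices `basisMat`. -/
noncomputable abbrev basisEnd (k : ℕ) : Module.End ℂ (ℕ →₀ ℂ) := (basisMat k).toEnd

theorem nat_blt_eq (a b : ℕ) : a.blt b = decide (a < b) := by
  rw [Bool.eq_iff_iff, Nat.blt_eq, decide_eq_true_eq]

theorem functional_basisEnd {k l : ℕ} (hk : k < 78) (hl : l < 78) :
    SparseMat.functional (dualMat k) (basisEnd l) = if k = l then 1 else 0 := by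
  have := List.all_eq_true.1 (List.all_eq_true.1 pair_dualMat_basisMat k (List.mem_range.2 hk)) l
    (List.mem_range.2 hl)
  rw [SparseMat.functional_toEnd, (Int.beq'_eq _ _).mp this, nat_beq_eq]
  by_cases h : k = l <;> simp [h]

open SparseMat in
theorem basisEnd_of_le {k : ℕ} (hk : 78 ≤ k) : basisEnd k = 0 := by
  have h₁ : ¬k < 6 := by omega
  have h₂ : ¬k < 42 := by omega
  have h₃ : posRootMat.getD (k - 42) [] = [] :=
    List.getD_eq_default _ _ (by simp [posRootMat]; omega)
  rw [basisEnd, basisMat, nat_blt_eq, nat_blt_eq, decide_eq_false h₁, decide_eq_false h₂, h₃]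
  simp [transpose, toEnd]

namespace SparseMat

theorem toEnd_eq_smul_of_isZero {l b : SparseMat} {n : ℤ}
    (h : (l ++ b.scale (-n)).isZero = true) : l.toEnd = (n : ℂ) • b.toEnd := by
  have := toEnd_eq_zero h
  rw [toEnd_append, toEnd_scale, Int.cast_neg] at this
  rw [← sub_eq_zero, ← this]
  module

end SparseMat

open SparseMat

theorem lie_coroot_basisEnd {i k : ℕ} (hi : i < 6) (hk : k < 78) :
    ⁅basisEnd i, basisEnd k⁆ = (corootValue i k : ℂ) • basisEnd k := by
  rw [← toEnd_comm]
  exact toEnd_eq_smul_of_isZero (List.all_eq_true.1 (List.all_eq_true.1 isZero_comm_coroot i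
    (List.mem_range.2 hi)) k (List.mem_range.2 hk))

theorem lie_pos_basisEnd {i k : ℕ} (hi : i < 6) (hk : k < 78) :
    ∃ (l : ℕ) (n : ℤ), ⁅basisEnd (6 + i), basisEnd k⁆ = (n : ℂ) • basisEnd l := by
  refine ⟨_, _, (toEnd_comm _ _).symm.trans (toEnd_eq_smul_of_isZero (List.all_eq_true.1
    (List.all_eq_true.1 isMultiple_comm_pos i (List.mem_range.2 hi)) k (List.mem_range.2 hk)))⟩

theorem lie_neg_basisEnd {i k : ℕ} (hi : i < 6) (hk : k < 78) :
    ∃ (l : ℕ) (n : ℤ), ⁅basisEnd (42 + i), basisEnd k⁆ = (n : ℂ) • basisEnd l := by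
  refine ⟨_, _, (toEnd_comm _ _).symm.trans (toEnd_eq_smul_of_isZero (List.all_eq_true.1
    (List.all_eq_true.1 isMultiple_comm_neg i (List.mem_range.2 hi)) k (List.mem_range.2 hk)))⟩

theorem lie_pos_neg_basisEnd {i j : ℕ} (hi : i < 6) (hj : j < 6) :
    ⁅basisEnd (6 + i), basisEnd (42 + j)⁆ = if i = j then basisEnd i else 0 := by
  have h := toEnd_eq_zero (List.all_eq_true.1 (List.all_eq_true.1 isZero_comm_pos_neg i
    (List.mem_range.2 hi)) j (List.mem_range.2 hj))
  rw [toEnd_append, toEnd_comm, nat_beq_eq] at h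
  by_cases hij : i = j
  · subst hij
    simp only [decide_true, cond_true, toEnd_scale, if_true] at h ⊢
    rw [← sub_eq_zero, ← h]
    push_cast
    module
  · simpa [hij, toEnd] using h

/-- The images of the Chevalley generators in the 27-dimensional representation. -/
noncomputable def generatorEnd : CartanMatrix.Generators (Fin 6) → Module.End ℂ (ℕ →₀ ℂ)
  | .H i => basisEnd i
  | .E i => basisEnd (6 + i)
  | .F i => basisEnd (42 + i)

theorem E₆_apply (i j : Fin 6) : CartanMatrix.E₆ i j = cartanEntry i j := by
  fin_cases i <;> fin_cases j <;> rfl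

theorem corootValue_pos (i j : Fin 6) : corootValue i (6 + j) = cartanEntry i j := by
  revert i j
  decide +kernel

theorem corootValue_neg (i j : Fin 6) : corootValue i (42 + j) = -cartanEntry i j := by
  revert i j
  decide +kernel

theorem corootValue_of_lt {i k : ℕ} (hk : k < 6) : corootValue i k = 0 := by
  simp [corootValue, basisCoeff, nat_blt_eq, hk]

theorem serre_basisEnd {s : ℕ} (hs : s ∈ [6, 42]) (i j : Fin 6) :
    (ad ℂ (Module.End ℂ (ℕ →₀ ℂ)) (basisEnd (s + i)) ^ (-cartanEntry i j).toNat)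
      ⁅basisEnd (s + i), basisEnd (s + j)⁆ = 0 := by
  have h := toEnd_eq_zero (List.all_eq_true.1 (List.all_eq_true.1 (List.all_eq_true.1
    isZero_serreMat s hs) i (List.mem_range.2 i.2)) j (List.mem_range.2 j.2))
  have hc : cartanEntry i j = -1 ∨ (-cartanEntry i j).toNat = 0 := by
    clear h
    revert i j
    decide
  rw [serreMat] at h
  rcases eq_or_ne (cartanEntry i j) (-1) with hc' | hc'
  · rw [hc', beq_self_eq_true, cond_true, toEnd_comm, toEnd_comm] at h
    simpa [hc'] using h
  · rw [hc.resolve_left hc', pow_zero, Module.End.one_apply, ← toEnd_comm]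
    rwa [beq_eq_false_iff_ne.2 hc', cond_false] at h

theorem lift_generatorEnd_of_mem_toSet {x : FreeLieAlgebra ℂ (CartanMatrix.Generators (Fin 6))}
    (hx : x ∈ CartanMatrix.Relations.toSet ℂ CartanMatrix.E₆) :
    FreeLieAlgebra.lift ℂ generatorEnd x = 0 := by
  set ψ := FreeLieAlgebra.lift ℂ generatorEnd
  have hψ (g) : ψ (FreeLieAlgebra.of ℂ g) = generatorEnd g := FreeLieAlgebra.lift_of_apply _ _
  have had (y z : FreeLieAlgebra ℂ (CartanMatrix.Generators (Fin 6))) (n : ℕ) :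
      ψ ((ad ℂ _ y ^ n) z) = (ad ℂ _ (ψ y) ^ n) (ψ z) := by
    induction n with
    | zero => rfl
    | succ n ih => simp [pow_succ', ih]
  rcases hx with ((((⟨⟨i, j⟩, rfl⟩ | ⟨⟨i, j⟩, rfl⟩) | ⟨⟨i, j⟩, rfl⟩) | ⟨⟨i, j⟩, rfl⟩) |
    ⟨⟨i, j⟩, rfl⟩) | ⟨⟨i, j⟩, rfl⟩
  · simp only [CartanMatrix.Relations.HH, Function.uncurry, Function.comp, LieHom.map_lie, hψ,
      generatorEnd]
    rw [lie_coroot_basisEnd i.2 (by omega), corootValue_of_lt j.2, Int.cast_zero, zero_smul]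
  · simp only [CartanMatrix.Relations.EF, Function.uncurry, Function.comp]
    have := lie_pos_neg_basisEnd i.2 j.2
    split_ifs with hij
    · subst hij
      rw [if_pos rfl] at this
      simp only [map_sub, LieHom.map_lie, hψ, generatorEnd, this, sub_self]
    · rw [if_neg (by omega)] at this
      simp only [LieHom.map_lie, hψ, generatorEnd, this]
  · simp only [CartanMatrix.Relations.HE, Function.uncurry, Function.comp, map_sub, map_zsmul,
      LieHom.map_lie, hψ, generatorEnd]
    rw [lie_coroot_basisEnd i.2 (by omega), corootValue_pos, E₆_apply]
    module
  · simp only [CartanMatrix.Relations.HF, Function.uncurry, Function.comp, map_add, map_zsmul,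
      LieHom.map_lie, hψ, generatorEnd]
    rw [lie_coroot_basisEnd i.2 (by omega), corootValue_neg, E₆_apply, Int.cast_neg]
    module
  · simp only [CartanMatrix.Relations.adE, Function.uncurry, Function.comp, had, LieHom.map_lie,
      hψ, generatorEnd, E₆_apply]
    exact serre_basisEnd (by simp) i j
  · simp only [CartanMatrix.Relations.adF, Function.uncurry, Function.comp, had, LieHom.map_lie,
      hψ, generatorEnd, E₆_apply]
    exact serre_basisEnd (by simp) i j

end Chevalley

section Frame

attribute [local instance] LieRing.ofAssociativeRing

open SparseMat

/-- A realization of a complex Lie algebra as the Lie algebra of type `E₆` spanned by the matrices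
`basisMat`. -/
structure E6Frame (L : Type*) [LieRing L] [LieAlgebra ℂ L] where
  /-- The 27-dimensional representation, on a coordinate subspace of `ℂ^(ℕ)`. -/
  rep : L →ₗ⁅ℂ⁆ Module.End ℂ (ℕ →₀ ℂ)
  rep_injective : Function.Injective rep
  /-- The basis vectors. -/
  vec : ℕ → L
  rep_vec : ∀ k, rep (vec k) = basisEnd k
  span_vec : Submodule.span ℂ (Set.range fun k : Fin 78 => vec k) = ⊤

theorem exists_lieHom_quotient_lift {X L' : Type*} [LieRing L'] [LieAlgebra ℂ L']
    (I : LieIdeal ℂ (FreeLieAlgebra ℂ X)) (ψ : FreeLieAlgebra ℂ X →ₗ⁅ℂ⁆ L') (h : I ≤ ψ.ker) :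
    ∃ χ : (FreeLieAlgebra ℂ X ⧸ I) →ₗ⁅ℂ⁆ L',
      ∀ x, χ (LieSubmodule.Quotient.mk x : FreeLieAlgebra ℂ X ⧸ I) = ψ x := by
  have hle : I.toSubmodule ≤ (ψ : FreeLieAlgebra ℂ X →ₗ[ℂ] L').ker := fun x hx => h hx
  let χ : (FreeLieAlgebra ℂ X ⧸ I) →ₗ[ℂ] L' := I.toSubmodule.liftQ _ hle
  have hχ (x) : χ (LieSubmodule.Quotient.mk x : FreeLieAlgebra ℂ X ⧸ I) = ψ x :=
    I.toSubmodule.liftQ_apply _ _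
  refine ⟨{ χ with map_lie' := ?_ }, hχ⟩
  intro x y
  obtain ⟨x, rfl⟩ := Submodule.Quotient.mk_surjective _ x
  obtain ⟨y, rfl⟩ := Submodule.Quotient.mk_surjective _ y
  change χ ⁅LieSubmodule.Quotient.mk x, LieSubmodule.Quotient.mk y⁆ =
    ⁅χ (LieSubmodule.Quotient.mk x), χ (LieSubmodule.Quotient.mk y)⁆
  rw [← LieSubmodule.Quotient.mk_bracket, hχ, hχ, hχ, LieHom.map_lie]

theorem lieSpan_of_eq_top (X : Type*) :
    LieSubalgebra.lieSpan ℂ _ (Set.range (FreeLieAlgebra.of ℂ (X := X))) = ⊤ := by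
  set S := LieSubalgebra.lieSpan ℂ _ (Set.range (FreeLieAlgebra.of ℂ (X := X)))
  let ρ : FreeLieAlgebra ℂ X →ₗ⁅ℂ⁆ S := FreeLieAlgebra.lift ℂ fun x =>
    ⟨FreeLieAlgebra.of ℂ x, LieSubalgebra.subset_lieSpan ⟨x, rfl⟩⟩
  have : S.incl.comp ρ = LieHom.id := by
    ext x
    simp [ρ]
  refine eq_top_iff.2 fun x _ => ?_
  have hx : (ρ x : FreeLieAlgebra ℂ X) = x := LieHom.congr_fun this x
  exact hx ▸ (ρ x).2

theorem exists_rep_of_e₆ : ∃ (ρ : LieAlgebra.e₆ ℂ →ₗ⁅ℂ⁆ Module.End ℂ (ℕ →₀ ℂ))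
    (X : CartanMatrix.Generators (Fin 6) → LieAlgebra.e₆ ℂ),
    (∀ g, ρ (X g) = generatorEnd g) ∧ LieSubalgebra.lieSpan ℂ _ (Set.range X) = ⊤ := by
  have hle : CartanMatrix.Relations.toIdeal ℂ CartanMatrix.E₆ ≤
      (FreeLieAlgebra.lift ℂ generatorEnd).ker :=
    LieSubmodule.lieSpan_le.2 fun x hx => LieHom.mem_ker.2 (lift_generatorEnd_of_mem_toSet hx)
  obtain ⟨χ, hχ⟩ := exists_lieHom_quotient_lift _ _ hle
  refine ⟨χ, fun g => LieSubmodule.Quotient.mk (FreeLieAlgebra.of ℂ g), fun g => ?_, ?_⟩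
  · exact (hχ _).trans (FreeLieAlgebra.lift_of_apply _ _)
  · let π : FreeLieAlgebra ℂ (CartanMatrix.Generators (Fin 6)) →ₗ⁅ℂ⁆ LieAlgebra.e₆ ℂ :=
      { (CartanMatrix.Relations.toIdeal ℂ CartanMatrix.E₆).toSubmodule.mkQ with
        map_lie' := fun {x y} => LieSubmodule.Quotient.mk_bracket _ x y }
    have hπ : Function.Surjective π := Submodule.Quotient.mk_surjective _
    have := LieSubalgebra.map_lieSpan (f := π)
      (s := Set.range (FreeLieAlgebra.of ℂ (X := CartanMatrix.Generators (Fin 6))))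
    rw [lieSpan_of_eq_top, ← Set.range_comp] at this
    refine eq_top_iff.2 fun x _ => ?_
    obtain ⟨y, rfl⟩ := hπ x
    have hy : π y ∈ (⊤ : LieSubalgebra ℂ _).map π := ⟨y, trivial, rfl⟩
    rw [this] at hy
    exact hy

variable {L : Type*} [LieRing L] [LieAlgebra ℂ L]

theorem basisEnd_mem_of_generators (S : LieSubalgebra ℂ (Module.End ℂ (ℕ →₀ ℂ)))
    (hS : ∀ g, generatorEnd g ∈ S) (k : ℕ) : basisEnd k ∈ S := by
  rcases lt_or_ge k 78 with hk | hk
  swap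
  · rw [basisEnd_of_le hk]
    exact S.zero_mem
  have hgen {s i : ℕ} (hs : s = 6 ∨ s = 42) (hi : i < 6) : basisEnd (s + i) ∈ S := by
    rcases hs with rfl | rfl
    · exact hS (.E ⟨i, hi⟩)
    · exact hS (.F ⟨i, hi⟩)
  have hroot (n : ℕ) : n < 36 → basisEnd (6 + n) ∈ S ∧ basisEnd (42 + n) ∈ S := by
    induction n using Nat.strong_induction_on with
    | _ n ih =>
      intro hn
      rcases lt_or_ge n 6 with hn' | hn'
      · exact ⟨hgen (.inl rfl) hn', hgen (.inr rfl) hn'⟩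
      obtain ⟨n, rfl⟩ := Nat.exists_eq_add_of_le hn'
      have h := List.all_eq_true.1 isZero_posRootParent n (List.mem_range.2 (by omega))
      simp only [Bool.and_eq_true, nat_blt_eq, decide_eq_true_eq] at h
      obtain ⟨⟨h₁, h₂⟩, h₃, h₄⟩ := h
      have h₅ := toEnd_eq_smul_of_isZero (n := 1) h₃
      have h₆ := toEnd_eq_smul_of_isZero (n := -1) h₄
      rw [Int.cast_one, one_smul, toEnd_comm] at h₅
      rw [Int.cast_neg, Int.cast_one, toEnd_comm] at h₆
      obtain ⟨h₇, h₈⟩ := ih _ h₂ (by omega)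
      rw [show 6 + (6 + n) = 12 + n by omega, show 42 + (6 + n) = 48 + n by omega]
      refine ⟨?_, ?_⟩
      · change (basisMat (12 + n)).toEnd ∈ S
        rw [← h₅]
        exact S.lie_mem (hgen (.inl rfl) h₁) h₇
      · have := S.smul_mem (-1) (S.lie_mem (hgen (.inr rfl) h₁) h₈)
        rw [h₆] at this
        convert this using 1
        module
  rcases lt_or_ge k 6 with h | h
  · exact hS (.H ⟨k, h⟩)
  rcases lt_or_ge k 42 with h' | h'
  · obtain ⟨n, rfl⟩ := Nat.exists_eq_add_of_le h
    exact (hroot n (by omega)).1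
  · obtain ⟨n, rfl⟩ := Nat.exists_eq_add_of_le h'
    exact (hroot n (by omega)).2

theorem lie_generatorEnd_mem_span (g : CartanMatrix.Generators (Fin 6)) {k : ℕ} (hk : k < 78) :
    ⁅generatorEnd g, basisEnd k⁆ ∈ Submodule.span ℂ (Set.range fun k => basisEnd k) := by
  have hmem (l : ℕ) (c : ℂ) :
      c • basisEnd l ∈ Submodule.span ℂ (Set.range fun k => basisEnd k) :=
    Submodule.smul_mem _ _ (Submodule.subset_span ⟨l, rfl⟩)
  rcases g with i | i | i
  · rw [generatorEnd, lie_coroot_basisEnd i.2 hk]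
    exact hmem _ _
  · obtain ⟨l, n, h⟩ := lie_pos_basisEnd i.2 hk
    rw [generatorEnd, h]
    exact hmem _ _
  · obtain ⟨l, n, h⟩ := lie_neg_basisEnd i.2 hk
    rw [generatorEnd, h]
    exact hmem _ _

theorem nonempty_e6Frame [LieAlgebra.IsSimple ℂ L] (h : Nonempty (L ≃ₗ⁅ℂ⁆ LieAlgebra.e₆ ℂ)) :
    Nonempty (E6Frame L) := by
  obtain ⟨E⟩ := h
  obtain ⟨ρ, X, hX, hXtop⟩ := exists_rep_of_e₆
  let φ : L →ₗ⁅ℂ⁆ Module.End ℂ (ℕ →₀ ℂ) := ρ.comp E.toLieHom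
  have hφ (x : LieAlgebra.e₆ ℂ) : φ (E.symm x) = ρ x := by simp [φ]
  have hrange (k : ℕ) : ∃ x, φ x = basisEnd k := by
    refine basisEnd_mem_of_generators φ.range (fun g => ?_) k
    exact ⟨E.symm (X g), (hφ _).trans (hX g)⟩
  choose v hv using hrange
  have hne : basisEnd 0 ≠ 0 := by
    intro h0
    have := functional_basisEnd (k := 0) (l := 0) (by norm_num) (by norm_num)
    rw [h0] at this
    simp at this
  have hker : φ.ker = ⊥ := by
    refine (LieAlgebra.IsSimple.eq_bot_or_eq_top φ.ker).resolve_right fun htop => hne ?_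
    rw [← hv 0]
    exact LieHom.mem_ker.1 (htop ▸ trivial)
  have hinj : Function.Injective φ := (LieHom.ker_eq_bot φ).1 hker
  let W : Submodule ℂ (Module.End ℂ (ℕ →₀ ℂ)) := Submodule.span ℂ (Set.range fun k => basisEnd k)
  let S : LieSubalgebra ℂ (LieAlgebra.e₆ ℂ) :=
    { carrier := {x | ∀ w ∈ W, ad ℂ _ (ρ x) w ∈ W}
      add_mem' := fun {x y} hx hy w hw => by
        rw [map_add, map_add, LinearMap.add_apply]
        exact W.add_mem (hx w hw) (hy w hw)
      zero_mem' := fun w _ => by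
        rw [map_zero, map_zero]
        exact W.zero_mem
      smul_mem' := fun c x hx w hw => by
        rw [map_smul, map_smul]
        exact W.smul_mem c (hx w hw)
      lie_mem' := fun {x y} hx hy w hw => by
        have : ad ℂ _ (ρ ⁅x, y⁆) w =
            ad ℂ _ (ρ x) (ad ℂ _ (ρ y) w) + (-1 : ℂ) • ad ℂ _ (ρ y) (ad ℂ _ (ρ x) w) := by
          have h : ad ℂ _ (ρ ⁅x, y⁆) w =
              ad ℂ _ (ρ x) (ad ℂ _ (ρ y) w) - ad ℂ _ (ρ y) (ad ℂ _ (ρ x) w) := by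
            rw [LieHom.map_lie, LieHom.map_lie]
            rfl
          rw [h]
          module
        change _ ∈ W
        rw [this]
        exact W.add_mem (hx _ (hy w hw)) (W.smul_mem _ (hy _ (hx w hw))) }
  have hS : S = ⊤ := by
    refine top_le_iff.1 (hXtop ▸ LieSubalgebra.lieSpan_le.2 ?_)
    rintro _ ⟨g, rfl⟩ w hw
    rw [hX]
    induction hw using Submodule.span_induction with
    | mem w hw =>
      obtain ⟨k, rfl⟩ := hw
      rcases lt_or_ge k 78 with hk | hk
      · exact lie_generatorEnd_mem_span g hk
      · simp only [basisEnd_of_le hk, map_zero]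
        exact W.zero_mem
    | zero => exact (map_zero (ad ℂ _ (generatorEnd g))).symm ▸ W.zero_mem
    | add x y _ _ hx hy =>
      rw [map_add]
      exact W.add_mem hx hy
    | smul c x _ hx =>
      rw [map_smul]
      exact W.smul_mem c hx
  let I : LieIdeal ℂ L :=
    { W.comap (φ : L →ₗ[ℂ] Module.End ℂ (ℕ →₀ ℂ)) with
      lie_mem := fun {x y} hy => by
        have hx : E x ∈ S := hS ▸ trivial
        have : φ ⁅x, y⁆ = ⁅ρ (E x), φ y⁆ := LieHom.map_lie _ _ _
        change φ ⁅x, y⁆ ∈ W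
        exact this ▸ hx _ hy }
  have hI : I = ⊤ := by
    refine (LieAlgebra.IsSimple.eq_bot_or_eq_top I).resolve_left fun hbot => hne ?_
    have h0 : v 0 ∈ I := by
      change φ (v 0) ∈ W
      exact (hv 0).symm ▸ Submodule.subset_span ⟨0, rfl⟩
    rw [hbot, LieSubmodule.mem_bot] at h0
    rw [← hv 0, h0, map_zero]
  refine ⟨⟨φ, hinj, v, hv, eq_top_iff.2 fun x _ => ?_⟩⟩
  have hx : φ x ∈ W := (hI ▸ trivial : x ∈ I)
  have hW : W ≤ (Submodule.span ℂ (Set.range fun k : Fin 78 => v k)).map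
      (φ : L →ₗ[ℂ] Module.End ℂ (ℕ →₀ ℂ)) := by
    refine Submodule.span_le.2 ?_
    rintro _ ⟨k, rfl⟩
    rcases lt_or_ge k 78 with hk | hk
    · exact ⟨v k, Submodule.subset_span ⟨⟨k, hk⟩, rfl⟩, hv k⟩
    · simp only [basisEnd_of_le hk]
      exact Submodule.zero_mem _
  obtain ⟨y, hy, hxy⟩ := hW hx
  exact hinj hxy ▸ hy

end Frame

section Reflection
open NormedSpace

variable {L : Type*} [LieRing L] [LieAlgebra ℂ L] [FiniteDimensional ℂ L]

/-- The automorphism `exp (ad z)`, on the vectors that are killed by `(ad z) ^ 3`. -/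
theorem exists_lieEquiv_apply_eq_add (z : L) : ∃ g : L ≃ₗ⁅ℂ⁆ L, ∀ x : L, ⁅z, ⁅z, ⁅z, x⁆⁆⁆ = 0 →
    g x = x + ⁅z, x⁆ + (2⁻¹ : ℂ) • ⁅z, ⁅z, x⁆⁆ := by
  let φ : L ≃ₗ[ℂ] (Fin (Module.finrank ℂ L) → ℂ) := (Module.finBasis ℂ L).equivFun
  let : NormedAddCommGroup L := NormedAddCommGroup.induced L _ φ φ.injective
  let : NormedSpace ℂ L := NormedSpace.induced ℂ L _ φ
  let β : L →L[ℂ] L →L[ℂ] L := LinearMap.toContinuousLinearMap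
    ((LinearMap.toContinuousLinearMap : (L →ₗ[ℂ] L) ≃ₗ[ℂ] (L →L[ℂ] L)).toLinearMap ∘ₗ
      (ad ℂ L : L →ₗ[ℂ] Module.End ℂ L))
  have hβ : ∀ x y, β x y = ⁅x, y⁆ := fun x y => rfl
  let g : L ≃ₗ⁅ℂ⁆ L :=
    { toFun := fun x => exp (β z) x
      map_add' := (exp (β z)).map_add
      map_smul' := (exp (β z)).map_smul
      map_lie' := fun {x y} => exp_apply_bilinear β (β z)
        (fun x y => by simp only [hβ]; exact leibniz_lie z x y) x y
      invFun := fun x => exp (-β z) x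
      left_inv := fun x => by simpa using exp_apply_exp_neg_apply (-β z) x
      right_inv := exp_apply_exp_neg_apply (β z) }
  refine ⟨g, fun x hx => (exp_apply_hasSum (β z) x).unique ?_⟩
  convert hasSum_sum_of_ne_finset_zero
    (f := fun n : ℕ => ((n.factorial : ℂ)⁻¹) • (β z ^ n) x) (s := Finset.range 3) ?_ using 1
  · simp [Finset.sum_range_succ, hβ]
  · intro n hn
    obtain ⟨m, rfl⟩ := Nat.exists_eq_add_of_le' (not_lt.1 fun h => hn (Finset.mem_range.2 h))
    simp [pow_succ, hβ, hx]
  · infer_instance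

/-- The simple reflection attached to an `sl₂`-triple, as an automorphism. -/
theorem exists_lieEquiv_reflection {H E F h : L} (hEF : ⁅E, F⁆ = H) (hHE : ⁅H, E⁆ = (2 : ℂ) • E)
    (hHF : ⁅H, F⁆ = (-2 : ℂ) • F) {a : ℂ} (hE : ⁅h, E⁆ = a • E) (hF : ⁅h, F⁆ = (-a) • F) :
    ∃ g : L ≃ₗ⁅ℂ⁆ L, g h = h - a • H := by
  obtain ⟨p, hp⟩ := exists_lieEquiv_apply_eq_add E
  obtain ⟨q, hq⟩ := exists_lieEquiv_apply_eq_add (-F)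
  have hEh : ⁅E, h⁆ = (-a) • E := by rw [← lie_skew, hE, neg_smul]
  have hFh : ⁅F, h⁆ = a • F := by rw [← lie_skew, hF, neg_smul, neg_neg]
  have hEH : ⁅E, H⁆ = (-2 : ℂ) • E := by rw [← lie_skew, hHE, neg_smul]
  have hFH : ⁅F, H⁆ = (2 : ℂ) • F := by rw [← lie_skew, hHF, neg_smul, neg_neg]
  have hFE : ⁅F, E⁆ = -H := by rw [← lie_skew, hEF]
  have hph : p h = h - a • E := by
    rw [hp h (by simp [hEh])]
    simp [hEh, sub_eq_add_neg]
  have hpE : p E = E := by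
    rw [hp E (by simp)]
    simp
  have hpH : p H = H - (2 : ℂ) • E := by
    rw [hp H (by simp [hEH])]
    simp [hEH, sub_eq_add_neg]
  have hqh : q h = h - a • F := by
    rw [hq h (by simp [hFh])]
    simp [hFh, sub_eq_add_neg]
  have hqE : q E = E + H - F := by
    rw [hq E (by simp [hFE, hFH])]
    simp only [neg_lie, lie_neg, hFE, hFH]
    module
  refine ⟨p.trans (q.trans p), ?_⟩
  have hpF : p (q h - a • q E) = h - a • H := by
    rw [hqh, hqE, show h - a • F - a • (E + H - F) = h - a • E - a • H by module, map_sub, map_sub,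
      map_smul, map_smul, hph, hpE, hpH]
    module
  rw [← hpF]
  change p (q (p h)) = _
  rw [hph, map_sub, map_smul]

end Reflection

namespace E6Frame

variable {L : Type*} [LieRing L] [LieAlgebra ℂ L] (F : E6Frame L)

section

attribute [local instance] LieRing.ofAssociativeRing

theorem lie_coroot_vec {i k : ℕ} (hi : i < 6) (hk : k < 78) :
    ⁅F.vec i, F.vec k⁆ = (corootValue i k : ℂ) • F.vec k := by
  refine F.rep_injective ?_
  rw [LieHom.map_lie, map_smul, F.rep_vec, F.rep_vec]
  exact lie_coroot_basisEnd hi hk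

theorem lie_pos_neg_vec {i j : ℕ} (hi : i < 6) (hj : j < 6) :
    ⁅F.vec (6 + i), F.vec (42 + j)⁆ = if i = j then F.vec i else 0 := by
  refine F.rep_injective ?_
  rw [LieHom.map_lie, F.rep_vec, F.rep_vec, lie_pos_neg_basisEnd hi hj]
  split_ifs
  · exact (F.rep_vec i).symm
  · exact (map_zero F.rep).symm

/-- The coordinate functionals. -/
noncomputable def coord (k : ℕ) : L →ₗ[ℂ] ℂ :=
  (dualMat k).functional ∘ₗ (F.rep : L →ₗ[ℂ] Module.End ℂ (ℕ →₀ ℂ))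

theorem coord_vec {k l : ℕ} (hk : k < 78) (hl : l < 78) :
    F.coord k (F.vec l) = if k = l then 1 else 0 := by
  have : F.coord k (F.vec l) = (dualMat k).functional (F.rep (F.vec l)) := rfl
  rw [this, F.rep_vec, functional_basisEnd hk hl]

/-- The frame transported by an automorphism. -/
noncomputable def map (g : L ≃ₗ⁅ℂ⁆ L) : E6Frame L where
  rep := F.rep.comp g.toLieHom
  rep_injective := F.rep_injective.comp g.injective
  vec k := g.symm (F.vec k)
  rep_vec k := by
    change F.rep (g (g.symm (F.vec k))) = _
    rw [g.apply_symm_apply, F.rep_vec]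
  span_vec := by
    have : (Set.range fun k : Fin 78 => g.symm (F.vec k)) =
        (g.symm : L →ₗ[ℂ] L) '' Set.range fun k : Fin 78 => F.vec k := (Set.range_comp _ _)
    rw [this, Submodule.span_image, F.span_vec, Submodule.map_top]
    exact LinearMap.range_eq_top.2 g.symm.surjective

end

theorem map_vec (g : L ≃ₗ⁅ℂ⁆ L) (k : ℕ) : (F.map g).vec k = g.symm (F.vec k) := rfl

/-- The basis underlying a frame. -/
noncomputable def basis : Module.Basis (Fin 78) ℂ L :=
  Module.Basis.mk (v := fun k : Fin 78 => F.vec k)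
    (Fintype.linearIndependent_iff.2 fun c hc i => by
      have := congrArg (F.coord i) hc
      simpa [F.coord_vec, Fin.val_inj] using this)
    F.span_vec.ge

theorem basis_apply (k : Fin 78) : F.basis k = F.vec k := by simp [basis]

theorem vec_ne_zero {k : ℕ} (hk : k < 78) : F.vec k ≠ 0 := by
  rw [← F.basis_apply ⟨k, hk⟩]
  exact F.basis.ne_zero _

theorem coord_eq_repr (k : Fin 78) (x : L) : F.coord k x = F.basis.repr x k := by
  have : F.coord k = F.basis.coord k := F.basis.ext fun l => by
    rw [F.basis_apply, F.coord_vec k.2 l.2, ← F.basis_apply, Module.Basis.coord_apply,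
      Module.Basis.repr_self, Finsupp.single_apply]
    simp [Fin.val_inj, eq_comm]
  rw [this]
  rfl

theorem ext_of_coord {x y : L} (h : ∀ k < 78, F.coord k x = F.coord k y) : x = y :=
  F.basis.ext_elem fun k => by rw [← coord_eq_repr, ← coord_eq_repr, h k k.2]

end E6Frame

section Labels

/-- The value of the `k`-th weight, for given values on the simple roots. -/
def labelValue (a : ℕ → ℤ) (k : ℕ) : ℤ :=
  a 0 * basisCoeff k 0 + a 1 * basisCoeff k 1 + a 2 * basisCoeff k 2 + a 3 * basisCoeff k 3 +
    a 4 * basisCoeff k 4 + a 5 * basisCoeff k 5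

theorem corootValue_eq_labelValue (i k : ℕ) : corootValue i k = labelValue (cartanEntry i) k := rfl

theorem labelValue_add_mul (a b : ℕ → ℤ) (c : ℤ) (k : ℕ) :
    labelValue (fun j => a j + c * b j) k = labelValue a k + c * labelValue b k := by
  simp only [labelValue]
  ring

theorem labelValue_pos (a : ℕ → ℤ) {i : ℕ} (hi : i < 6) : labelValue a (6 + i) = a i := by
  have h : ∀ i j : Fin 6, basisCoeff (6 + i) j = if i = j then 1 else 0 := by decide +kernel
  have h' (j : Fin 6) := h ⟨i, hi⟩ j
  have h₀ := h' 0; have h₁ := h' 1; have h₂ := h' 2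
  have h₃ := h' 3; have h₄ := h' 4; have h₅ := h' 5
  simp only [Fin.ext_iff] at h₀ h₁ h₂ h₃ h₄ h₅
  rw [labelValue]
  interval_cases i <;> simp_all

theorem labelValue_one_eq_zero {k : ℕ} (hk : k < 78) (h : labelValue (fun _ => 1) k = 0) :
    k < 6 := by
  have : ∀ k : Fin 78, labelValue (fun _ => 1) k = 0 → k < 6 := by decide +kernel
  exact this ⟨k, hk⟩ h

theorem natAbs_labelValue_one_le {k : ℕ} (hk : k < 78) :
    (labelValue (fun _ => 1) k).natAbs ≤ 11 := by
  have : ∀ k : Fin 78, (labelValue (fun _ => 1) k).natAbs ≤ 11 := by decide +kernel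
  exact this ⟨k, hk⟩

theorem basisCoeff_nonneg {k : ℕ} (hk : k < 42) (i : Fin 6) : 0 ≤ basisCoeff k i := by
  have : ∀ (k : Fin 42) (i : Fin 6), 0 ≤ basisCoeff k i := by decide +kernel
  exact this ⟨k, hk⟩ i

theorem labelValue_nonneg {a : ℕ → ℤ} (ha : ∀ i < 6, 0 ≤ a i) {k : ℕ} (hk : k < 42) :
    0 ≤ labelValue a k := by
  have h (i : Fin 6) : 0 ≤ a i * basisCoeff k i := mul_nonneg (ha i i.2) (basisCoeff_nonneg hk i)
  have h₀ := h 0; have h₁ := h 1; have h₂ := h 2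
  have h₃ := h 3; have h₄ := h 4; have h₅ := h 5
  simp only [Fin.isValue, Fin.coe_ofNat_eq_mod, Nat.reduceMod] at h₀ h₁ h₂ h₃ h₄ h₅
  rw [labelValue]
  positivity

namespace E6Frame

variable {L : Type*} [LieRing L] [LieAlgebra ℂ L] (F : E6Frame L)

/-- The elements of the Cartan subalgebra that take the given integral values on the simple
roots. -/
def HasLabels (h : L) (a : ℕ → ℤ) : Prop :=
  ∀ k < 78, ⁅h, F.vec k⁆ = (labelValue a k : ℂ) • F.vec k

variable {F}

theorem lie_symm_apply (g : L ≃ₗ⁅ℂ⁆ L) (x y : L) : ⁅x, g.symm y⁆ = g.symm ⁅g x, y⁆ := by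
  rw [LieEquiv.map_lie, g.symm_apply_apply]

theorem HasLabels.map {h h' : L} {a : ℕ → ℤ} (ha : F.HasLabels h a) (g : L ≃ₗ⁅ℂ⁆ L)
    (hg : g h' = h) : (F.map g).HasLabels h' a := fun k hk => by
  rw [map_vec, lie_symm_apply, hg, ha k hk, map_smul]

theorem HasLabels.lie_pos {h : L} {a : ℕ → ℤ} (ha : F.HasLabels h a) {i : ℕ} (hi : i < 6) :
    ⁅h, F.vec (6 + i)⁆ = (a i : ℂ) • F.vec (6 + i) := by
  rw [ha _ (by omega), labelValue_pos a hi]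

theorem hasLabels_coroot {i : ℕ} (hi : i < 6) : F.HasLabels (F.vec i) (cartanEntry i) :=
  fun _ hk => F.lie_coroot_vec hi hk

theorem HasLabels.add_smul {h h' : L} {a b : ℕ → ℤ} (ha : F.HasLabels h a)
    (hb : F.HasLabels h' b) (c : ℤ) :
    F.HasLabels (h + (c : ℂ) • h') fun j => a j + c * b j := fun k hk => by
  rw [add_lie, smul_lie, ha k hk, hb k hk, labelValue_add_mul]
  push_cast
  module

theorem HasLabels.coord_lie {h : L} {a : ℕ → ℤ} (ha : F.HasLabels h a) (x : L) {k : ℕ}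
    (hk : k < 78) : F.coord k ⁅h, x⁆ = labelValue a k * F.coord k x := by
  have : F.coord k ∘ₗ (ad ℂ L h : L →ₗ[ℂ] L) = (labelValue a k : ℂ) • F.coord k :=
    F.basis.ext fun l => by
      rw [F.basis_apply, LinearMap.comp_apply, ad_apply, ha l l.2, map_smul, LinearMap.smul_apply,
        F.coord_vec hk l.2]
      split_ifs with hkl
      · rw [hkl]
      · simp
  exact LinearMap.congr_fun this x

theorem HasLabels.coord_eq_zero {h : L} {a : ℕ → ℤ} (ha : F.HasLabels h a) {x : L} {m : ℂ}
    (hx : ⁅h, x⁆ = m • x) {k : ℕ} (hk : k < 78) (hm : m ≠ labelValue a k) : F.coord k x = 0 := by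
  have h := ha.coord_lie x hk
  rw [hx, map_smul, smul_eq_mul] at h
  exact (mul_eq_mul_right_iff.1 h).resolve_left hm

theorem HasLabels.isSemisimple [FiniteDimensional ℂ L] {h : L} {a : ℕ → ℤ}
    (ha : F.HasLabels h a) {N : ℕ} (hN : ∀ k < 78, (labelValue a k).natAbs ≤ N) :
    (ad ℂ L h).IsSemisimple := by
  let p : Polynomial ℂ := ∏ n ∈ Finset.Icc (-N : ℤ) N, (Polynomial.X - Polynomial.C (n : ℂ))
  have hp : p.Separable := by
    refine Polynomial.separable_prod_X_sub_C_iff'.2 ?_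
    intro x _ y _ hxy
    exact_mod_cast hxy
  refine Module.End.isSemisimple_of_squarefree_aeval_eq_zero hp.squarefree ?_
  refine F.basis.ext fun k => ?_
  have hk : Module.End.HasEigenvector (ad ℂ L h) (labelValue a k : ℂ) (F.vec k) :=
    ⟨Module.End.mem_eigenspace_iff.2 (ha k k.2), F.vec_ne_zero k.2⟩
  rw [F.basis_apply, Module.End.aeval_apply_of_hasEigenvector hk, Polynomial.eval_prod,
    Finset.prod_eq_zero (i := labelValue a k), zero_smul, LinearMap.zero_apply]
  · have := hN k k.2
    rw [Finset.mem_Icc]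
    omega
  · simp

theorem exists_hasLabels_one : ∃ y : L, F.HasLabels y fun _ => 1 := by
  have h := ((((((hasLabels_coroot (F := F) (i := 0) (by norm_num)).add_smul
    (hasLabels_coroot (i := 0) (by norm_num)) 7).add_smul
    (hasLabels_coroot (i := 1) (by norm_num)) 11).add_smul
    (hasLabels_coroot (i := 2) (by norm_num)) 15).add_smul
    (hasLabels_coroot (i := 3) (by norm_num)) 21).add_smul
    (hasLabels_coroot (i := 4) (by norm_num)) 15).add_smul
    (hasLabels_coroot (i := 5) (by norm_num)) 8
  exact ⟨_, fun k hk => (h k hk).trans rfl⟩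

theorem exists_frame_hasLabels [FiniteDimensional ℂ L] [IsKilling ℂ L] (F : E6Frame L) {e h f : L}
    (t : IsSl2Triple h e f) (hh : (ad ℂ L h).IsSemisimple) :
    ∃ (F' : E6Frame L) (a : ℕ → ℤ), F'.HasLabels h a := by
  obtain ⟨y, hy⟩ := F.exists_hasLabels_one
  obtain ⟨g, hg⟩ := exists_lieEquiv_lie_eq_zero hh
    (hy.isSemisimple fun k hk => natAbs_labelValue_one_le hk)
  have hcoord {k : ℕ} (hk : k < 78) (hk' : ¬k < 6) : F.coord k (g h) = 0 :=
    hy.coord_eq_zero (m := 0) (by rw [hg, zero_smul]) hk fun h0 =>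
      hk' (labelValue_one_eq_zero hk (by exact_mod_cast h0.symm))
  have hsum : g h = F.coord 0 (g h) • F.vec 0 + F.coord 1 (g h) • F.vec 1 +
      F.coord 2 (g h) • F.vec 2 + F.coord 3 (g h) • F.vec 3 + F.coord 4 (g h) • F.vec 4 +
      F.coord 5 (g h) • F.vec 5 := by
    refine F.ext_of_coord fun k hk => ?_
    simp only [map_add, map_smul, F.coord_vec hk (show 0 < 78 by norm_num),
      F.coord_vec hk (show 1 < 78 by norm_num), F.coord_vec hk (show 2 < 78 by norm_num),
      F.coord_vec hk (show 3 < 78 by norm_num), F.coord_vec hk (show 4 < 78 by norm_num),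
      F.coord_vec hk (show 5 < 78 by norm_num)]
    by_cases hk' : k < 6
    · interval_cases k <;> simp
    · rw [hcoord hk hk']
      have : k ≠ 0 ∧ k ≠ 1 ∧ k ≠ 2 ∧ k ≠ 3 ∧ k ≠ 4 ∧ k ≠ 5 := by omega
      simp [this]
  set c : ℕ → ℂ := fun i => F.coord i (g h) with hc
  let A (j : ℕ) : ℂ := c 0 * cartanEntry 0 j + c 1 * cartanEntry 1 j + c 2 * cartanEntry 2 j +
    c 3 * cartanEntry 3 j + c 4 * cartanEntry 4 j + c 5 * cartanEntry 5 j
  have hlie (k : ℕ) (hk : k < 78) : ⁅g h, F.vec k⁆ = (c 0 * corootValue 0 k +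
      c 1 * corootValue 1 k + c 2 * corootValue 2 k + c 3 * corootValue 3 k +
      c 4 * corootValue 4 k + c 5 * corootValue 5 k) • F.vec k := by
    rw [hsum]
    simp only [add_lie, smul_lie, F.lie_coroot_vec (show 0 < 6 by norm_num) hk,
      F.lie_coroot_vec (show 1 < 6 by norm_num) hk, F.lie_coroot_vec (show 2 < 6 by norm_num) hk,
      F.lie_coroot_vec (show 3 < 6 by norm_num) hk, F.lie_coroot_vec (show 4 < 6 by norm_num) hk,
      F.lie_coroot_vec (show 5 < 6 by norm_num) hk]
    module
  have hA (j : ℕ) : ∃ m : ℤ, j < 6 → A j = m := by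
    by_cases hj : j < 6
    · have h₁ := hlie (6 + j) (by omega)
      simp only [corootValue_eq_labelValue, labelValue_pos _ hj] at h₁
      have h₂ : ⁅h, g.symm (F.vec (6 + j))⁆ = A j • g.symm (F.vec (6 + j)) := by
        rw [lie_symm_apply, h₁, map_smul]
      obtain ⟨m, hm⟩ := exists_int_of_eigenvalue t h₂ fun h0 => F.vec_ne_zero
        (show 6 + j < 78 by omega) (by rw [← g.apply_symm_apply (F.vec (6 + j)), h0, map_zero])
      exact ⟨m, fun _ => hm⟩
    · exact ⟨0, fun h => absurd h hj⟩
  choose a ha using hA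
  refine ⟨F.map g, a, HasLabels.map (h := g h) (fun k hk => ?_) g rfl⟩
  rw [hlie k hk]
  congr 1
  simp only [corootValue, labelValue]
  push_cast
  rw [← ha 0 (by norm_num), ← ha 1 (by norm_num), ← ha 2 (by norm_num), ← ha 3 (by norm_num),
    ← ha 4 (by norm_num), ← ha 5 (by norm_num)]
  simp only [A]
  ring

end E6Frame

end Labels

section Dominant

/-- The value of the sum of the positive roots. -/
def sumPosRoots (a : ℕ → ℤ) : ℤ :=
  16 * a 0 + 22 * a 1 + 30 * a 2 + 42 * a 3 + 30 * a 4 + 16 * a 5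

theorem sumPosRoots_cartanEntry {i : ℕ} (hi : i < 6) : sumPosRoots (cartanEntry i) = 2 := by
  interval_cases i <;> rfl

theorem sumPosRoots_add_mul (a b : ℕ → ℤ) (c : ℤ) :
    sumPosRoots (fun j => a j + c * b j) = sumPosRoots a + c * sumPosRoots b := by
  simp only [sumPosRoots]
  ring

theorem isZero_comm_neg_or : ((List.range 36).all fun k => (List.range 6).all fun i =>
    ((basisMat (42 + k)).comm (basisMat (6 + i))).isZero ||
      (List.range 6).all fun j => decide (basisCoeff (42 + k) j + basisCoeff (6 + i) j ≤ 0)) =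
    true := by
  decide +kernel

namespace E6Frame

variable {L : Type*} [LieRing L] [LieAlgebra ℂ L] {F : E6Frame L}

section

attribute [local instance] LieRing.ofAssociativeRing

theorem lie_vec_eq_zero {k l : ℕ} (h : ((basisMat k).comm (basisMat l)).isZero = true) :
    ⁅F.vec k, F.vec l⁆ = 0 := by
  refine F.rep_injective ?_
  rw [LieHom.map_lie, F.rep_vec, F.rep_vec, ← SparseMat.toEnd_comm, SparseMat.toEnd_eq_zero h]
  exact (map_zero F.rep).symm

end

theorem sum_coord (x : L) : ∑ k : Fin 78, F.coord k x • F.vec k = x := by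
  simp_rw [coord_eq_repr, ← basis_apply]
  exact F.basis.sum_repr x

theorem HasLabels.le_two [FiniteDimensional ℂ L] {e h f : L} {a : ℕ → ℤ} (ha : F.HasLabels h a)
    (hpos : ∀ i < 6, 0 ≤ a i) (t : IsSl2Triple h e f) {i : ℕ} (hi : i < 6) : a i ≤ 2 := by
  by_contra! hlt
  refine F.vec_ne_zero (show 6 + i < 78 by omega)
    (eq_zero_of_lie_f_eq_zero t (by omega) (ha.lie_pos hi) ?_)
  have hf : ⁅h, f⁆ = ((-2 : ℤ) : ℂ) • f := by
    rw [t.lie_lie_smul_f ℂ]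
    push_cast
    module
  rw [← F.sum_coord f, sum_lie]
  refine Finset.sum_eq_zero fun k _ => ?_
  rw [smul_lie]
  by_cases hk : labelValue a k = -2
  · have hk' : 42 ≤ (k : ℕ) := by
      by_contra! h'
      have := labelValue_nonneg hpos h'
      omega
    obtain ⟨k, hk₀⟩ := k
    obtain ⟨k, rfl⟩ := Nat.exists_eq_add_of_le hk'
    have h := List.all_eq_true.1 (List.all_eq_true.1 isZero_comm_neg_or k
      (List.mem_range.2 (by omega))) i (List.mem_range.2 hi)
    rcases Bool.or_eq_true_iff.1 h with h | h
    · rw [lie_vec_eq_zero h, smul_zero]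
    · have h' (j : ℕ) (hj : j < 6) : a j * (basisCoeff (42 + k) j + basisCoeff (6 + i) j) ≤ 0 :=
        mul_nonpos_of_nonneg_of_nonpos (hpos j hj)
          (of_decide_eq_true (List.all_eq_true.1 h j (List.mem_range.2 hj)))
      have h₀ := h' 0 (by norm_num); have h₁ := h' 1 (by norm_num); have h₂ := h' 2 (by norm_num)
      have h₃ := h' 3 (by norm_num); have h₄ := h' 4 (by norm_num); have h₅ := h' 5 (by norm_num)
      have h₆ := labelValue_pos a hi
      simp only [labelValue] at hk h₆
      linarith
  · rw [ha.coord_eq_zero hf k.2 (by exact_mod_cast Ne.symm hk), zero_smul]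

theorem HasLabels.exists_reflection [FiniteDimensional ℂ L] {h : L} {a : ℕ → ℤ}
    (ha : F.HasLabels h a) {i : ℕ} (hi : i < 6) :
    ∃ F' : E6Frame L, F'.HasLabels h fun j => a j + -a i * cartanEntry i j := by
  have hEF := F.lie_pos_neg_vec hi hi
  rw [if_pos rfl] at hEF
  have hii : cartanEntry i i = 2 := by interval_cases i <;> rfl
  have hpos (a : ℕ → ℤ) : labelValue a (42 + i) = -a i := by
    have h : ∀ i j : Fin 6, basisCoeff (42 + i) j = -basisCoeff (6 + i) j := by decide +kernel
    have h' (j : Fin 6) := h ⟨i, hi⟩ j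
    have h₀ := h' 0; have h₁ := h' 1; have h₂ := h' 2
    have h₃ := h' 3; have h₄ := h' 4; have h₅ := h' 5
    simp only [Fin.isValue, Fin.coe_ofNat_eq_mod, Nat.reduceMod] at h₀ h₁ h₂ h₃ h₄ h₅
    rw [← labelValue_pos a hi, labelValue, labelValue, h₀, h₁, h₂, h₃, h₄, h₅]
    ring
  have hHE := (hasLabels_coroot (F := F) hi).lie_pos hi
  have hHF := hasLabels_coroot (F := F) hi (42 + i) (by omega)
  have hhF := ha (42 + i) (by omega)
  rw [hpos, hii] at hHF
  rw [hii] at hHE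
  rw [hpos] at hhF
  obtain ⟨g, hg⟩ := exists_lieEquiv_reflection (a := a i) hEF (by exact_mod_cast hHE)
    (by exact_mod_cast hHF) (ha.lie_pos hi) (by exact_mod_cast hhF)
  refine ⟨F.map g, HasLabels.map (ha.add_smul (hasLabels_coroot hi) (-a i)) g ?_⟩
  rw [hg]
  push_cast
  module

theorem exists_frame_hasLabels_nonneg [FiniteDimensional ℂ L] {h : L} {a : ℕ → ℤ}
    (ha : F.HasLabels h a) :
    ∃ (F' : E6Frame L) (a' : ℕ → ℤ), F'.HasLabels h a' ∧ ∀ i < 6, 0 ≤ a' i := by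
  have hfin : {m : ℤ | Module.End.HasEigenvalue (ad ℂ L h) (m : ℂ)}.Finite :=
    (Module.End.finite_hasEigenvalue (ad ℂ L h)).preimage Int.cast_injective.injOn
  obtain ⟨N, hN⟩ := hfin.bddAbove
  have hbound (F : E6Frame L) (a : ℕ → ℤ) (ha : F.HasLabels h a) {i : ℕ} (hi : i < 6) :
      a i ≤ N :=
    hN <| Module.End.hasEigenvalue_of_hasEigenvector
      ⟨Module.End.mem_eigenspace_iff.2 (ha.lie_pos hi), F.vec_ne_zero (by omega)⟩
  obtain ⟨_, ⟨F', a', ha', rfl⟩, hmax⟩ := Int.exists_greatest_of_bdd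
    (P := fun s => ∃ (F : E6Frame L) (a : ℕ → ℤ), F.HasLabels h a ∧ sumPosRoots a = s)
    ⟨sumPosRoots fun _ => N, by
      rintro _ ⟨F, a, ha, rfl⟩
      have h₀ := hbound F a ha (i := 0) (by norm_num)
      have h₁ := hbound F a ha (i := 1) (by norm_num)
      have h₂ := hbound F a ha (i := 2) (by norm_num)
      have h₃ := hbound F a ha (i := 3) (by norm_num)
      have h₄ := hbound F a ha (i := 4) (by norm_num)
      have h₅ := hbound F a ha (i := 5) (by norm_num)
      simp only [sumPosRoots]
      linarith⟩ ⟨_, F, a, ha, rfl⟩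
  refine ⟨F', a', ha', fun i hi => ?_⟩
  obtain ⟨F'', hF''⟩ := ha'.exists_reflection hi
  have := hmax _ ⟨F'', _, hF'', rfl⟩
  rw [sumPosRoots_add_mul, sumPosRoots_cartanEntry hi] at this
  linarith

end E6Frame

end Dominant

section Enumeration

/-- The value of a positive root, for given values on the simple roots. -/
def posValue (a b c d e f n : ℕ) : ℕ :=
  a * decimalDigit n 0 + b * decimalDigit n 1 + c * decimalDigit n 2 + d * decimalDigit n 3 +
    e * decimalDigit n 4 + f * decimalDigit n 5

/-- The number of positive roots with a given value. -/
def posCount (a b c d e f m : ℕ) : ℕ := posRoot.countP fun n => (posValue a b c d e f n).beq m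

theorem label_enumeration : ((List.range 3).all fun a => (List.range 3).all fun b =>
    (List.range 3).all fun c => (List.range 3).all fun d => (List.range 3).all fun e =>
    (List.range 3).all fun f =>
      !(6 + 2 * posCount a b c d e f 0).beq (posCount a b c d e f 2) ||
      !(6 + 2 * posCount a b c d e f 0 + posCount a b c d e f 1).beq 12 ||
      (a.beq 2 && b.beq 0 && c.beq 0 && d.beq 2 && e.beq 0 && f.beq 2)) = true := by
  decide +kernel

theorem posRoot_eq_map : posRoot = (List.range 36).map fun k => posRoot.getD k 0 := by
  decide

theorem labelValue_six_add (a : ℕ → ℕ) {k : ℕ} (hk : k < 36) :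
    labelValue (fun j => a j) (6 + k) =
      posValue (a 0) (a 1) (a 2) (a 3) (a 4) (a 5) (posRoot.getD k 0) := by
  have h₁ : (6 + k).blt 6 = false := by simp [nat_blt_eq]
  have h₂ : (6 + k).blt 42 = true := by simp [nat_blt_eq]; omega
  simp only [labelValue, posValue, basisCoeff, h₁, h₂, cond_false, cond_true,
    Nat.add_sub_cancel_left]
  push_cast
  ring

theorem labelValue_add_forty_two (a : ℕ → ℕ) (k : ℕ) :
    labelValue (fun j => a j) (42 + k) =
      -posValue (a 0) (a 1) (a 2) (a 3) (a 4) (a 5) (posRoot.getD k 0) := by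
  have h₁ : (42 + k).blt 6 = false := by simp [nat_blt_eq]; omega
  have h₂ : (42 + k).blt 42 = false := by simp [nat_blt_eq]
  simp only [labelValue, posValue, basisCoeff, h₁, h₂, cond_false, Nat.add_sub_cancel_left]
  push_cast
  ring

theorem labelValue_of_lt (a : ℕ → ℤ) {k : ℕ} (hk : k < 6) : labelValue a k = 0 := by
  have h : k.blt 6 = true := by simpa [nat_blt_eq] using hk
  simp [labelValue, basisCoeff, h]

/-- The number of basis vectors with a given value. -/
def labelCount (a : ℕ → ℤ) (m : ℤ) : ℕ :=
  (Finset.univ.filter fun k : Fin 78 => labelValue a k = m).card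

theorem countP_range_posRoot (p : ℕ → Bool) :
    (List.range 36).countP (fun k => p (posRoot.getD k 0)) = posRoot.countP p := by
  conv_rhs => rw [posRoot_eq_map]
  rw [List.countP_map]
  rfl

theorem labelCount_eq (a : ℕ → ℕ) (m : ℤ) :
    labelCount (fun j => a j) m = (if m = 0 then 6 else 0) +
      (posRoot.countP fun n => (posValue (a 0) (a 1) (a 2) (a 3) (a 4) (a 5) n : ℤ) = m) +
      (posRoot.countP fun n => (posValue (a 0) (a 1) (a 2) (a 3) (a 4) (a 5) n : ℤ) = -m) := by
  have h₀ : labelCount (fun j => a j) m =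
      Nat.count (fun k => labelValue (fun j => a j) k = m) 78 := by
    rw [Nat.count_eq_card_filter_range, labelCount]
    refine Finset.card_bij (fun k _ => (k : ℕ)) (fun k hk => ?_) (fun _ _ _ _ => Fin.ext)
      fun k hk => ?_
    · rw [Finset.mem_filter] at hk ⊢
      exact ⟨Finset.mem_range.2 k.2, hk.2⟩
    · rw [Finset.mem_filter, Finset.mem_range] at hk
      exact ⟨⟨k, hk.1⟩, Finset.mem_filter.2 ⟨Finset.mem_univ _, hk.2⟩, rfl⟩
  have h₁ : Nat.count (fun k => labelValue (fun j => a j) k = m) 6 = if m = 0 then 6 else 0 := by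
    have : Nat.count (fun k => labelValue (fun j => a j) k = m) 6 =
        Nat.count (fun _ => (0 : ℤ) = m) 6 :=
      List.countP_congr fun k hk => by simp only [labelValue_of_lt _ (List.mem_range.1 hk)]
    rw [this]
    by_cases hm : m = 0
    · subst hm
      simp
    · simp [hm, Ne.symm hm]
  have h₂ : Nat.count (fun k => labelValue (fun j => a j) (6 + k) = m) 36 =
      posRoot.countP fun n => (posValue (a 0) (a 1) (a 2) (a 3) (a 4) (a 5) n : ℤ) = m := by
    rw [← countP_range_posRoot]
    exact List.countP_congr fun k hk => by
      simp only [labelValue_six_add a (List.mem_range.1 hk)]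
  have h₃ : Nat.count (fun k => labelValue (fun j => a j) (42 + k) = m) 36 =
      posRoot.countP fun n => (posValue (a 0) (a 1) (a 2) (a 3) (a 4) (a 5) n : ℤ) = -m := by
    rw [← countP_range_posRoot]
    exact List.countP_congr fun k _ => by
      simp only [labelValue_add_forty_two, neg_eq_iff_eq_neg]
  rw [h₀, Nat.count_add _ 42 36, Nat.count_add _ 6 36, h₁, h₂, h₃]

theorem posCount_eq (a b c d e f m : ℕ) :
    (posRoot.countP fun n => (posValue a b c d e f n : ℤ) = m) = posCount a b c d e f m :=
  List.countP_congr fun n _ => by simp [nat_beq_eq]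

theorem countP_posValue_neg (a b c d e f : ℕ) {m : ℤ} (hm : m < 0) :
    (posRoot.countP fun n => (posValue a b c d e f n : ℤ) = m) = 0 :=
  List.countP_eq_zero.2 fun n _ => by
    rw [decide_eq_true_eq]
    omega

theorem labelCount_zero_eq (a : ℕ → ℕ) : labelCount (fun j => a j) 0 =
    6 + 2 * posCount (a 0) (a 1) (a 2) (a 3) (a 4) (a 5) 0 := by
  have := posCount_eq (a 0) (a 1) (a 2) (a 3) (a 4) (a 5) 0
  rw [Nat.cast_zero] at this
  rw [labelCount_eq, neg_zero, if_pos rfl, this]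
  omega

theorem labelCount_natCast_eq (a : ℕ → ℕ) {m : ℕ} (hm : 0 < m) :
    labelCount (fun j => a j) m = posCount (a 0) (a 1) (a 2) (a 3) (a 4) (a 5) m := by
  rw [labelCount_eq, if_neg (by omega), posCount_eq, countP_posValue_neg _ _ _ _ _ _ (by omega)]
  omega

theorem labelCount_neg_natCast_eq (a : ℕ → ℕ) {m : ℕ} (hm : 0 < m) :
    labelCount (fun j => a j) (-m) = posCount (a 0) (a 1) (a 2) (a 3) (a 4) (a 5) m := by
  rw [labelCount_eq, if_neg (by omega), neg_neg, posCount_eq,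
    countP_posValue_neg _ _ _ _ _ _ (by omega)]
  omega

theorem eq_label_of_labelCount {a : ℕ → ℤ} (h₀ : ∀ i < 6, 0 ≤ a i) (h₂ : ∀ i < 6, a i ≤ 2)
    (h : labelCount a 0 = labelCount a 2) (h' : labelCount a (-1) + labelCount a 0 = 12) :
    a 0 = 2 ∧ a 1 = 0 ∧ a 2 = 0 ∧ a 3 = 2 ∧ a 4 = 0 ∧ a 5 = 2 := by
  set b : ℕ → ℕ := fun j => (a j).toNat with hb
  have hab (j : ℕ) (hj : j < 6) : (b j : ℤ) = a j := Int.toNat_of_nonneg (h₀ j hj)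
  have hval : labelValue a = labelValue fun j => b j := by
    funext k
    simp only [labelValue]
    rw [hab 0, hab 1, hab 2, hab 3, hab 4, hab 5] <;> norm_num
  have hcount (m : ℤ) : labelCount a m = labelCount (fun j => b j) m := by
    simp only [labelCount, hval]
  have hb2 (j : ℕ) (hj : j < 6) : b j ∈ List.range 3 := by
    have := hab j hj
    have := h₂ j hj
    rw [List.mem_range]
    omega
  have e₁ := labelCount_neg_natCast_eq b one_pos
  have e₂ := labelCount_natCast_eq b two_pos
  have e₀ := labelCount_zero_eq b
  rw [Nat.cast_one] at e₁
  rw [Nat.cast_ofNat] at e₂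
  rw [hcount, hcount, e₀, e₂] at h
  rw [hcount, hcount, e₁, e₀] at h'
  have key := List.all_eq_true.1 (List.all_eq_true.1 (List.all_eq_true.1 (List.all_eq_true.1
    (List.all_eq_true.1 (List.all_eq_true.1 label_enumeration _ (hb2 0 (by norm_num))) _
    (hb2 1 (by norm_num))) _ (hb2 2 (by norm_num))) _ (hb2 3 (by norm_num))) _
    (hb2 4 (by norm_num))) _ (hb2 5 (by norm_num))
  simp only [nat_beq_eq, Bool.or_eq_true, Bool.and_eq_true, Bool.not_eq_true',
    decide_eq_true_eq, decide_eq_false_iff_not] at key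
  have g₀ := hab 0; have g₁ := hab 1; have g₂ := hab 2
  have g₃ := hab 3; have g₄ := hab 4; have g₅ := hab 5
  omega

end Enumeration

section Counting

theorem card_eq_card_add_finrank_ker {ι V : Type*} [AddCommGroup V] [Module ℂ V]
    (b : Module.Basis ι ℂ V) (A B : Finset ι) (T : V →ₗ[ℂ] V)
    (h : (Submodule.span ℂ (b '' A)).map T = Submodule.span ℂ (b '' B)) :
    A.card = B.card + Module.finrank ℂ ↥(T.ker ⊓ Submodule.span ℂ (b '' A)) := by
  classical
  have hcard (C : Finset ι) : Module.finrank ℂ ↥(Submodule.span ℂ (b '' C)) = C.card := by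
    rw [← Finset.coe_image, finrank_span_finset_eq_card,
      Finset.card_image_of_injective _ b.injective]
    rw [Finset.coe_image]
    exact (b.linearIndependent.linearIndepOn C).id_image
  have : FiniteDimensional ℂ ↥(Submodule.span ℂ (b '' A)) :=
    FiniteDimensional.span_of_finite ℂ (A.finite_toSet.image b)
  have key := (T.domRestrict (Submodule.span ℂ (b '' A))).finrank_range_add_finrank_ker
  rw [LinearMap.range_domRestrict, LinearMap.ker_domRestrict, h, hcard, hcard] at key
  rw [← key, ← Submodule.finrank_map_subtype_eq, Submodule.map_comap_subtype, inf_comm]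

namespace E6Frame

variable {L : Type*} [LieRing L] [LieAlgebra ℂ L] {F : E6Frame L} {e h f : L} {a : ℕ → ℤ}

theorem mem_span_basis_iff (A : Finset (Fin 78)) (x : L) :
    x ∈ Submodule.span ℂ (F.basis '' A) ↔ ∀ k ∉ A, F.coord k x = 0 := by
  rw [Module.Basis.mem_span_image]
  refine ⟨fun hx k hk => ?_, fun hx k hk => ?_⟩
  · rw [coord_eq_repr]
    by_contra h0
    exact hk (hx (Finsupp.mem_support_iff.2 h0))
  · by_contra hA
    exact Finsupp.mem_support_iff.1 hk (by rw [← coord_eq_repr]; exact hx k hA)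

theorem HasLabels.mem_span_of_lie_eq (ha : F.HasLabels h a) {x : L} {m : ℤ}
    (hx : ⁅h, x⁆ = (m : ℂ) • x) {p : ℤ → Prop} [DecidablePred p] (hm : p m) :
    x ∈ Submodule.span ℂ
      (F.basis '' (Finset.univ.filter fun k : Fin 78 => p (labelValue a k) : Finset (Fin 78))) := by
  refine (mem_span_basis_iff _ _).2 fun k hk => ha.coord_eq_zero hx k.2 fun h0 => hk ?_
  rw [Finset.mem_filter, ← Int.cast_injective h0]
  exact ⟨Finset.mem_univ _, hm⟩

theorem HasLabels.lie_eq_of_mem_span (ha : F.HasLabels h a) {x : L} {m : ℤ}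
    (hx : x ∈ Submodule.span ℂ (F.basis ''
      (Finset.univ.filter fun k : Fin 78 => labelValue a k = m : Finset (Fin 78)))) :
    ⁅h, x⁆ = (m : ℂ) • x := by
  rw [mem_span_basis_iff] at hx
  refine F.ext_of_coord fun k hk => ?_
  rw [ha.coord_lie x hk, map_smul, smul_eq_mul]
  by_cases h0 : labelValue a k = m
  · rw [h0]
  · rw [hx ⟨k, hk⟩ (by simpa using h0), mul_zero, mul_zero]

theorem HasLabels.iSup_eigenspace_eq_top (ha : F.HasLabels h a) :
    ⨆ μ, Module.End.eigenspace (ad ℂ L h) μ = ⊤ := by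
  refine top_le_iff.1 fun x _ => ?_
  rw [← F.sum_coord x]
  exact Submodule.sum_mem _ fun k _ => Submodule.smul_mem _ _ (Submodule.mem_iSup_of_mem
    (labelValue a k : ℂ) (Module.End.mem_eigenspace_iff.2 (ha k k.2)))

theorem HasLabels.ker_ad_le [FiniteDimensional ℂ L] (ha : F.HasLabels h a)
    (t : IsSl2Triple h e f) : (ad ℂ L e : L →ₗ[ℂ] L).ker ≤ Submodule.span ℂ (F.basis ''
      (Finset.univ.filter fun k : Fin 78 => -1 ≤ labelValue a k : Finset (Fin 78))) := by
  have hmaps : ∀ x ∈ (ad ℂ L e : L →ₗ[ℂ] L).ker, ad ℂ L h x ∈ (ad ℂ L e : L →ₗ[ℂ] L).ker := by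
    intro x hx
    rw [LinearMap.mem_ker, ad_apply] at hx ⊢
    rw [ad_apply, leibniz_lie, hx, lie_zero, add_zero, ← lie_skew e h, t.lie_h_e_smul ℂ, neg_lie,
      smul_lie, hx, smul_zero, neg_zero]
  rw [Submodule.eq_iSup_inf_genEigenspace 1 hmaps ha.iSup_eigenspace_eq_top]
  refine iSup_le fun μ x hx => ?_
  have hex : ⁅e, x⁆ = 0 := hx.1
  have hhx : ⁅h, x⁆ = μ • x := Module.End.mem_eigenspace_iff.1 hx.2
  by_cases h0 : x = 0
  · rw [h0]
    exact Submodule.zero_mem _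
  obtain ⟨m, rfl⟩ := exists_int_of_eigenvalue t hhx h0
  refine ha.mem_span_of_lie_eq (p := (-1 ≤ ·)) hhx ?_
  by_contra! hm
  exact h0 (eq_zero_of_lie_e_eq_zero t (by omega) hhx hex)

theorem HasLabels.map_ad_eq [FiniteDimensional ℂ L] (ha : F.HasLabels h a)
    (t : IsSl2Triple h e f) {p q : ℤ → Prop} [DecidablePred p] [DecidablePred q]
    (hpq : ∀ m, p m ↔ q (m + 2)) (hq : ∀ m, q m → 0 < m) :
    (Submodule.span ℂ (F.basis '' (Finset.univ.filter fun k : Fin 78 => p (labelValue a k) :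
      Finset (Fin 78)))).map (ad ℂ L e : L →ₗ[ℂ] L) =
    Submodule.span ℂ (F.basis '' (Finset.univ.filter fun k : Fin 78 => q (labelValue a k) :
      Finset (Fin 78))) := by
  refine le_antisymm ?_ ?_
  · rw [Submodule.map_span_le]
    rintro _ ⟨k, hk, rfl⟩
    have hk' : p (labelValue a k) := by simpa using hk
    refine ha.mem_span_of_lie_eq (m := labelValue a k + 2) ?_ ((hpq _).1 hk')
    rw [ad_apply, F.basis_apply, lie_lie_eq_smul (t.lie_h_e_smul ℂ) (ha k k.2)]
    push_cast
    module
  · rw [Submodule.span_le]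
    rintro _ ⟨k, hk, rfl⟩
    have hk' : q (labelValue a k) := by simpa using hk
    obtain ⟨x, hx, hex⟩ := exists_lie_eq_of_eigenvalue_pos t (hq _ hk') (ha k k.2)
    refine ⟨x, ha.mem_span_of_lie_eq hx ((hpq _).2 (by rwa [sub_add_cancel])), ?_⟩
    rw [ad_apply, F.basis_apply, hex]

theorem HasLabels.labelCount_zero_eq [FiniteDimensional ℂ L] (ha : F.HasLabels h a)
    (t : IsSl2Triple h e f) (hinj : ∀ x : L, ⁅x, e⁆ = 0 → ⁅h, x⁆ = 0 → x = 0) :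
    labelCount a 0 = labelCount a 2 := by
  have key := card_eq_card_add_finrank_ker F.basis _ _ _
    (ha.map_ad_eq t (p := (· = 0)) (q := (· = 2)) (fun m => by omega) fun m hm => by omega)
  have hbot : (ad ℂ L e : L →ₗ[ℂ] L).ker ⊓ Submodule.span ℂ (F.basis ''
      (Finset.univ.filter fun k : Fin 78 => labelValue a k = 0 : Finset (Fin 78))) = ⊥ := by
    refine (Submodule.eq_bot_iff _).2 fun x hx => ?_
    have hhx := ha.lie_eq_of_mem_span hx.2
    have hex : ⁅e, x⁆ = 0 := hx.1
    exact hinj x (by rw [← lie_skew, hex, neg_zero]) (by rw [hhx, Int.cast_zero, zero_smul])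
  rwa [hbot, finrank_bot, add_zero] at key

theorem HasLabels.labelCount_add_eq [FiniteDimensional ℂ L] (ha : F.HasLabels h a)
    (t : IsSl2Triple h e f) :
    labelCount a (-1) + labelCount a 0 = Module.finrank ℂ ↥(ad ℂ L e : L →ₗ[ℂ] L).ker := by
  have key := card_eq_card_add_finrank_ker F.basis _ _ _
    (ha.map_ad_eq t (p := (-1 ≤ ·)) (q := (1 ≤ ·)) (fun m => by omega) fun m hm => by omega)
  rw [inf_eq_left.2 (ha.ker_ad_le t)] at key
  have hsum : (Finset.univ.filter fun k : Fin 78 => -1 ≤ labelValue a k).card =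
      (Finset.univ.filter fun k : Fin 78 => 1 ≤ labelValue a k).card +
        (labelCount a (-1) + labelCount a 0) := by
    simp only [labelCount, Finset.card_filter, ← Finset.sum_add_distrib]
    refine Finset.sum_congr rfl fun k _ => ?_
    split_ifs <;> omega
  omega

theorem exists_frame_hasLabels_eq [FiniteDimensional ℂ L] [IsKilling ℂ L] (F : E6Frame L)
    (t : IsSl2Triple h e f) (hdist : IsDistinguished L e)
    (hdim : Module.finrank ℂ ↥(centralizer L e) = 12) :
    ∃ (F' : E6Frame L) (a : ℕ → ℤ), F'.HasLabels h a ∧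
      a 0 = 2 ∧ a 1 = 0 ∧ a 2 = 0 ∧ a 3 = 2 ∧ a 4 = 0 ∧ a 5 = 2 := by
  obtain ⟨hss, hinj⟩ := isSemisimple_ad_of_isDistinguished t hdist
  obtain ⟨F₁, a₁, ha₁⟩ := F.exists_frame_hasLabels t hss
  obtain ⟨F₂, a, ha, hpos⟩ := exists_frame_hasLabels_nonneg ha₁
  refine ⟨F₂, a, ha, eq_label_of_labelCount hpos (fun i hi => ha.le_two hpos t hi)
    (ha.labelCount_zero_eq t hinj) ?_⟩
  have hker : (ad ℂ L e : L →ₗ[ℂ] L).ker = (centralizer L e).toSubmodule := by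
    ext x
    rw [LinearMap.mem_ker, ad_apply, ← lie_skew, neg_eq_zero]
    rfl
  rw [ha.labelCount_add_eq t, hker]
  exact hdim

theorem HasLabels.eq [FiniteDimensional ℂ L] [IsKilling ℂ L] {h' : L} {a' : ℕ → ℤ}
    (ha : F.HasLabels h a) (ha' : F.HasLabels h' a') (h₀ : ∀ i < 6, a i = a' i) : h = h' := by
  have hval (k : ℕ) : labelValue a k = labelValue a' k := by
    simp only [labelValue, h₀ 0 (by norm_num), h₀ 1 (by norm_num), h₀ 2 (by norm_num),
      h₀ 3 (by norm_num), h₀ 4 (by norm_num), h₀ 5 (by norm_num)]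
  have hzero : (ad ℂ L (h - h') : L →ₗ[ℂ] L) = 0 := F.basis.ext fun k => by
    rw [ad_apply, F.basis_apply, sub_lie, ha k k.2, ha' k k.2, hval, sub_self,
      LinearMap.zero_apply]
  have hmem : h - h' ∈ center ℂ L := by
    refine (LieModule.mem_maxTrivSubmodule ℂ L L _).2 fun y => ?_
    rw [← lie_skew, ← ad_apply ℂ, hzero, LinearMap.zero_apply, neg_zero]
  rw [center_eq_bot, LieSubmodule.mem_bot] at hmem
  exact sub_eq_zero.1 hmem

end E6Frame

end Counting

section Comb

attribute [local instance] LieRing.ofAssociativeRing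

/-- The matrix of an integral combination of basis vectors. -/
def combMat (u : List (ℕ × ℤ)) : SparseMat := u.flatMap fun p => (basisMat p.1).scale p.2

/-- A check that the bracket of two integral combinations of basis vectors is a third one. -/
noncomputable def combCheck (u v w : List (ℕ × ℤ)) : Bool :=
  ((combMat u).comm (combMat v) ++ (combMat w).scale (-1)).isZero

/-- The element `h` of a standard `sl₂`-triple. -/
def stdH : List (ℕ × ℤ) := [(0, 8), (1, 10), (2, 14), (3, 20), (4, 14), (5, 8)]

/-- The element `e` of a standard `sl₂`-triple. -/
def stdE : List (ℕ × ℤ) := [(6, 1), (12, 1), (11, 1), (16, 1), (9, 1), (24, 1)]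

/-- The element `f` of a standard `sl₂`-triple. -/
def stdF : List (ℕ × ℤ) :=
  [(42, 4), (45, 10), (47, 4), (48, 4), (50, 4), (51, 4), (52, 4), (54, 4), (55, -4), (60, 10)]

/-- The values of the simple roots on the element `h` of the standard `sl₂`-triple. -/
def stdLabel (i : ℕ) : ℤ := [2, 0, 0, 2, 0, 2].getD i 0

theorem combCheck_std : (combCheck stdH stdE (stdE.map fun p => (p.1, 2 * p.2)) &&
    combCheck stdH stdF (stdF.map fun p => (p.1, -2 * p.2)) &&
      combCheck stdE stdF stdH) = true := by
  decide +kernel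

theorem combCheck_stdH : ((List.range 78).all fun k =>
    combCheck stdH [(k, 1)] [(k, labelValue stdLabel k)]) = true := by
  decide +kernel

namespace E6Frame

variable {L : Type*} [LieRing L] [LieAlgebra ℂ L] (F : E6Frame L) {e h f : L}

/-- An integral combination of the vectors of a frame. -/
def comb (u : List (ℕ × ℤ)) : L := (u.map fun p => (p.2 : ℂ) • F.vec p.1).sum

@[simp]
theorem comb_nil : F.comb [] = 0 := rfl

@[simp]
theorem comb_cons (p : ℕ × ℤ) (u : List (ℕ × ℤ)) :
    F.comb (p :: u) = (p.2 : ℂ) • F.vec p.1 + F.comb u := by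
  simp [comb]

theorem rep_comb (u : List (ℕ × ℤ)) : F.rep (F.comb u) = (combMat u).toEnd := by
  induction u with
  | nil => exact map_zero F.rep
  | cons p u ih =>
    have : combMat (p :: u) = (basisMat p.1).scale p.2 ++ combMat u := by
      rw [combMat, List.flatMap_cons, combMat]
    rw [comb_cons, map_add, map_smul, ih, F.rep_vec, this, SparseMat.toEnd_append,
      SparseMat.toEnd_scale]

theorem comb_scale (n : ℤ) (u : List (ℕ × ℤ)) :
    F.comb (u.map fun p => (p.1, n * p.2)) = (n : ℂ) • F.comb u := by
  induction u with
  | nil => simp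
  | cons p u ih =>
    rw [List.map_cons, comb_cons, comb_cons, ih]
    push_cast
    module

theorem lie_comb {u v w : List (ℕ × ℤ)} (h : combCheck u v w = true) :
    ⁅F.comb u, F.comb v⁆ = F.comb w := by
  refine F.rep_injective ?_
  have := SparseMat.toEnd_eq_zero h
  rw [SparseMat.toEnd_append, SparseMat.toEnd_scale, SparseMat.toEnd_comm] at this
  rw [LieHom.map_lie, rep_comb, rep_comb, rep_comb, ← sub_eq_zero, ← this]
  push_cast
  module

theorem map_comb (g : L ≃ₗ⁅ℂ⁆ L) (u : List (ℕ × ℤ)) : (F.map g).comb u = g.symm (F.comb u) := by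
  induction u with
  | nil => exact (map_zero g.symm).symm
  | cons p u ih => rw [comb_cons, comb_cons, map_add, map_smul, ih, map_vec]

theorem coord_comb {k : ℕ} (hk : k < 78) {u : List (ℕ × ℤ)} (hu : ∀ p ∈ u, p.1 < 78) :
    F.coord k (F.comb u) = ((u.map fun p => bif k.beq p.1 then p.2 else 0).sum : ℤ) := by
  induction u with
  | nil => simp
  | cons p u ih =>
    rw [comb_cons, map_add, map_smul, F.coord_vec hk (hu p List.mem_cons_self),
      ih fun q hq => hu q (List.mem_cons_of_mem _ hq), List.map_cons, List.sum_cons, nat_beq_eq]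
    by_cases hkp : k = p.1 <;> simp [hkp]

theorem hasLabels_stdH : F.HasLabels (F.comb stdH) stdLabel := fun k hk => by
  have := F.lie_comb (List.all_eq_true.1 combCheck_stdH k (List.mem_range.2 hk))
  simpa using this

theorem isSl2Triple_std [Nontrivial L] :
    IsSl2Triple (F.comb stdH) (F.comb stdE) (F.comb stdF) := by
  have hcheck := combCheck_std
  rw [Bool.and_eq_true, Bool.and_eq_true] at hcheck
  have h₁ := F.lie_comb hcheck.1.1
  have h₂ := F.lie_comb hcheck.1.2
  rw [comb_scale] at h₁ h₂
  refine ⟨fun h0 => ?_, F.lie_comb hcheck.2, ?_, ?_⟩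
  · have := F.hasLabels_stdH 6 (by norm_num)
    rw [h0, zero_lie, show labelValue stdLabel 6 = 2 from rfl] at this
    refine F.vec_ne_zero (show 6 < 78 by norm_num) ?_
    rw [eq_comm, smul_eq_zero] at this
    exact this.resolve_left (by norm_num)
  · rw [h₁]
    push_cast
    module
  · rw [h₂]
    push_cast
    module

theorem exists_frame_comb_eq [FiniteDimensional ℂ L] [IsKilling ℂ L] [Nontrivial L]
    (F : E6Frame L) (t : IsSl2Triple h e f) (hdist : IsDistinguished L e)
    (hdim : Module.finrank ℂ ↥(centralizer L e) = 12) :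
    ∃ F : E6Frame L, h = F.comb stdH ∧ e = F.comb stdE ∧ f = F.comb stdF := by
  obtain ⟨F, a, ha, h₀, h₁, h₂, h₃, h₄, h₅⟩ := F.exists_frame_hasLabels_eq t hdist hdim
  have hh : h = F.comb stdH := by
    refine ha.eq F.hasLabels_stdH fun i hi => ?_
    interval_cases i <;> assumption
  have ts := F.isSl2Triple_std
  rw [← hh] at ts
  have hsurj {e' f' : L} (t' : IsSl2Triple h e' f') (w : L) (hw : ⁅h, w⁆ = (2 : ℂ) • w) :
      ∃ x : L, ⁅h, x⁆ = 0 ∧ ⁅e', x⁆ = w := by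
    obtain ⟨x, hx, hex⟩ := exists_lie_eq_of_eigenvalue_pos t' (m := 2) (by norm_num)
      (by rw [hw]; norm_num)
    exact ⟨x, by rw [hx]; norm_num, hex⟩
  obtain ⟨g, hgh, hge⟩ := exists_lieEquiv_apply_eq_of_surjective (t.lie_h_e_smul ℂ)
    (ts.lie_h_e_smul ℂ) (fun x hx hex => (isSemisimple_ad_of_isDistinguished t hdist).2 x
      (by rw [← lie_skew, hex, neg_zero]) hx) (hsurj t) (hsurj ts)
  have hh' : h = (F.map g).comb stdH := by
    rw [map_comb, ← hh, eq_comm, LieEquiv.symm_apply_eq, hgh]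
  have he' : e = (F.map g).comb stdE := by
    rw [map_comb, ← hge, LieEquiv.symm_apply_apply]
  refine ⟨F.map g, hh', he', ?_⟩
  have ts' := (F.map g).isSl2Triple_std
  rw [← hh', ← he'] at ts'
  refine sub_eq_zero.1 (eq_zero_of_lie_e_eq_zero t (m := -2) (by norm_num) ?_ ?_)
  · rw [lie_sub, t.lie_h_f_nsmul, ts'.lie_h_f_nsmul]
    push_cast
    module
  · rw [lie_sub, t.lie_e_f, ts'.lie_e_f, sub_self]

end E6Frame

end Comb

section Centralizer

/-- The coefficient of a basis vector in an integral combination of basis vectors. -/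
def combCoeff (k : ℕ) (u : List (ℕ × ℤ)) : ℤ := (u.map fun p => bif k.beq p.1 then p.2 else 0).sum

/-- A basis of the centralizer of the element `e` of the standard `sl₂`-triple. -/
def centralizerVec (i : ℕ) : List (ℕ × ℤ) :=
  [[(6, -1), (11, -1), (13, -1), (18, -1), (19, 1)],
   [(12, -1), (14, -1), (15, -1), (16, -1), (20, 1)],
   stdE,
   [(22, -1), (25, 1)],
   [(23, 1), (26, 1)],
   [(17, 1), (21, -1), (22, 2), (23, -2), (27, -1), (29, -1), (30, 1)],
   [(28, 1), (32, 1), (33, 1), (34, 1)],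
   [(28, 1), (31, -1), (32, 1), (36, 1)],
   [(37, 1)],
   [(38, 1)],
   [(40, 1)],
   [(41, 1)]].getD i []

/-- Positions of basis vectors at which the centralizer basis is in reduced echelon form. -/
def centralizerPivot (i : ℕ) : ℕ := [19, 20, 9, 25, 26, 17, 33, 36, 37, 38, 40, 41].getD i 0

/-- A basis of the centre of the centralizer of the element `e` of the standard `sl₂`-triple. -/
def centerVec (i : ℕ) : List (ℕ × ℤ) :=
  [stdE, [(37, 1), (38, 1)], [(40, 1)], [(41, 1)]].getD i []

/-- Positions of basis vectors at which the centre basis is in reduced echelon form. -/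
def centerPivot (i : ℕ) : ℕ := [9, 37, 40, 41].getD i 0

/-- The brackets of the first vector of the centralizer basis with all the others. -/
def bracketZero (i : ℕ) : List (ℕ × ℤ) :=
  [[],
   [(17, -1), (21, 1), (22, -1), (23, 1), (25, -1), (26, -1), (27, 1), (29, 1), (30, -1)],
   [],
   [],
   [(31, -1), (33, -1), (34, -1), (36, 1)],
   [(28, 2), (32, 2), (33, 2), (34, 2)],
   [(37, -2), (38, 1)],
   [(37, -1), (38, 2)],
   [(41, 1)],
   [(41, -1)],
   [],
   []].getD i []

/-- The brackets of the second vector of the centralizer basis with all the others. -/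
def bracketOne (i : ℕ) : List (ℕ × ℤ) :=
  [[(17, 1), (21, -1), (22, 1), (23, -1), (25, 1), (26, 1), (27, -1), (29, -1), (30, 1)],
   [],
   [],
   [(31, -1), (33, -1), (34, -1), (36, 1)],
   [],
   [(28, -2), (31, 2), (32, -2), (36, -2)],
   [(37, 2), (38, -1)],
   [(37, 1), (38, -2)],
   [(40, 1)],
   [(40, -1)],
   [],
   []].getD i []

/-- The brackets of the element `f` of the standard `sl₂`-triple with some vectors of the
centralizer basis. -/
def bracketF (i : ℕ) : List (ℕ × ℤ) :=
  [[(0, 4), (1, 8), (2, 4), (3, 8), (4, 4), (5, 4), (7, -2), (44, -2), (46, 2)],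
   [(0, 4), (2, 8), (3, 8), (4, 8), (5, 4), (8, -2), (10, 2), (43, -2)],
   [],
   [(6, -4), (11, 4), (18, 4), (19, 4)],
   [(12, 4), (14, 4), (15, -4), (16, -4)],
   [], [], [], [], [],
   [(37, -4), (38, 4), (39, 10)],
   [(35, -10), (37, -4), (38, 4)]].getD i []

/-- The brackets of the entries of `bracketF` with the centre basis: position in the centralizer
basis, position in the centre basis, bracket. -/
def bracketTable : List (ℕ × ℕ × List (ℕ × ℤ)) :=
  [(0, 2, [(41, -2)]), (0, 3, [(41, 8)]), (1, 2, [(40, 8)]), (1, 3, [(40, -2)]),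
   (3, 1, [(41, 8)]), (3, 2, []), (3, 3, []), (4, 1, [(40, 8)]), (4, 2, []), (4, 3, []),
   (10, 0, [(40, -10)]), (10, 1, []), (10, 2, []), (10, 3, []),
   (11, 0, [(41, -10)]), (11, 1, []), (11, 2, []), (11, 3, [])]

/-- The weights of the centre basis. -/
def centerWeight (i : ℕ) : ℤ := [2, 8, 10, 10].getD i 0

theorem combCheck_centralizerVec : ((List.range 12).all fun i =>
    combCheck (centralizerVec i) stdE [] &&
    (List.range 4).all fun j => combCheck (centerVec j) (centralizerVec i) []) = true := by
  decide +kernel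

theorem combCheck_bracket : ((List.range 12).all fun i =>
    combCheck (centralizerVec 0) (centralizerVec i) (bracketZero i) &&
    combCheck (centralizerVec 1) (centralizerVec i) (bracketOne i)) = true := by
  decide +kernel

theorem combCheck_bracketF : ([0, 1, 3, 4, 10, 11].all fun i =>
    combCheck stdF (centralizerVec i) (bracketF i)) = true := by
  decide +kernel

theorem combCheck_bracketTable : (bracketTable.all fun p =>
    combCheck (bracketF p.1) (centerVec p.2.1) p.2.2) = true := by
  decide +kernel

theorem combCheck_centerWeight : ((List.range 4).all fun i =>
    combCheck stdH (centerVec i) ((centerVec i).map fun p => (p.1, centerWeight i * p.2))) =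
    true := by
  decide +kernel

namespace E6Frame

variable {L : Type*} [LieRing L] [LieAlgebra ℂ L] (F : E6Frame L)

theorem linearIndependent_comb {n : ℕ} (u : ℕ → List (ℕ × ℤ)) (p : ℕ → ℕ)
    (hp : ∀ i : Fin n, p i < 78) (hu : ∀ i : Fin n, ∀ q ∈ u i, q.1 < 78)
    (h : ∀ i j : Fin n, combCoeff (p i) (u j) = if i = j then 1 else 0) :
    LinearIndependent ℂ fun i : Fin n => F.comb (u i) := by
  refine LinearIndependent.of_pairwise_dual_eq_zero_one _ (fun i => F.coord (p i))
    (fun i j hij => ?_) fun i => ?_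
  · exact (F.coord_comb (hp i) (hu j)).trans
      (by rw [← combCoeff, h, if_neg hij, Int.cast_zero])
  · exact (F.coord_comb (hp i) (hu i)).trans
      (by rw [← combCoeff, h, if_pos rfl, Int.cast_one])

theorem linearIndependent_centralizerVec :
    LinearIndependent ℂ fun i : Fin 12 => F.comb (centralizerVec i) :=
  F.linearIndependent_comb _ centralizerPivot (by decide) (by decide) (by decide)

theorem linearIndependent_centerVec :
    LinearIndependent ℂ fun i : Fin 4 => F.comb (centerVec i) :=
  F.linearIndependent_comb _ centerPivot (by decide) (by decide) (by decide)

theorem lie_centralizerVec_stdE {i : ℕ} (hi : i < 12) :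
    ⁅F.comb (centralizerVec i), F.comb stdE⁆ = 0 := by
  have h := List.all_eq_true.1 combCheck_centralizerVec i (List.mem_range.2 hi)
  rw [Bool.and_eq_true] at h
  rw [F.lie_comb h.1, comb_nil]

theorem lie_centerVec_centralizerVec {i j : ℕ} (hi : i < 12) (hj : j < 4) :
    ⁅F.comb (centerVec j), F.comb (centralizerVec i)⁆ = 0 := by
  have h := List.all_eq_true.1 combCheck_centralizerVec i (List.mem_range.2 hi)
  rw [Bool.and_eq_true] at h
  rw [F.lie_comb (List.all_eq_true.1 h.2 j (List.mem_range.2 hj)), comb_nil]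

theorem lie_bracketF {i j : ℕ} {u : List (ℕ × ℤ)} (hi : i ∈ [0, 1, 3, 4, 10, 11])
    (h : (i, j, u) ∈ bracketTable) :
    ⁅⁅F.comb stdF, F.comb (centralizerVec i)⁆, F.comb (centerVec j)⁆ = F.comb u := by
  rw [F.lie_comb (List.all_eq_true.1 combCheck_bracketF i hi)]
  exact F.lie_comb (List.all_eq_true.1 combCheck_bracketTable _ h)

theorem lie_stdH_centerVec {i : ℕ} (hi : i < 4) :
    ⁅F.comb stdH, F.comb (centerVec i)⁆ = (centerWeight i : ℂ) • F.comb (centerVec i) := by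
  rw [F.lie_comb (List.all_eq_true.1 combCheck_centerWeight i (List.mem_range.2 hi)), comb_scale]

theorem exists_eq_sum_centralizerVec [FiniteDimensional ℂ L]
    (hdim : Module.finrank ℂ ↥(centralizer L (F.comb stdE)) = 12) {x : L}
    (hx : ⁅x, F.comb stdE⁆ = 0) :
    ∃ c : Fin 12 → ℂ, ∑ i, c i • F.comb (centralizerVec i) = x := by
  rw [← Submodule.mem_span_range_iff_exists_fun]
  have hle : Submodule.span ℂ (Set.range fun i : Fin 12 => F.comb (centralizerVec i)) ≤
      (centralizer L (F.comb stdE)).toSubmodule := by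
    rw [Submodule.span_le]
    rintro _ ⟨i, rfl⟩
    exact F.lie_centralizerVec_stdE i.2
  rw [Submodule.eq_of_le_of_finrank_eq hle]
  · exact hx
  · rw [finrank_span_eq_card F.linearIndependent_centralizerVec, Fintype.card_fin]
    exact hdim.symm

theorem sum_mul_combCoeff_eq_zero {n : ℕ} {x : L} (u w : ℕ → List (ℕ × ℤ)) (c : Fin n → ℂ)
    (hu : ∀ i : Fin n, ∀ q ∈ w i, q.1 < 78)
    (hw : ∀ i : Fin n, ⁅x, F.comb (u i)⁆ = F.comb (w i))
    (h : ⁅x, ∑ i, c i • F.comb (u i)⁆ = 0) {k : ℕ} (hk : k < 78) :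
    ∑ i, c i * (combCoeff k (w i) : ℂ) = 0 := by
  have := congrArg (F.coord k) h
  rw [map_zero, lie_sum, map_sum] at this
  rw [← this]
  refine Finset.sum_congr rfl fun i _ => ?_
  rw [lie_smul, hw, map_smul, F.coord_comb hk (hu i), smul_eq_mul]
  rfl

theorem inCenterOfCentralizer_iff [FiniteDimensional ℂ L]
    (hdim : Module.finrank ℂ ↥(centralizer L (F.comb stdE)) = 12) (v : L) :
    InCenterOfCentralizer L (F.comb stdE) v ↔
      ∃ c : Fin 4 → ℂ, ∑ i, c i • F.comb (centerVec i) = v := by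
  constructor
  · rintro ⟨hv, hcomm⟩
    obtain ⟨c, rfl⟩ := F.exists_eq_sum_centralizerVec hdim hv
    have hbr (i : Fin 12) := List.all_eq_true.1 combCheck_bracket i (List.mem_range.2 i.2)
    simp only [Bool.and_eq_true] at hbr
    have hx {i : ℕ} (hi : i < 12) :
        ⁅F.comb (centralizerVec i), ∑ i : Fin 12, c i • F.comb (centralizerVec i)⁆ = 0 := by
      rw [← lie_skew, hcomm _ (F.lie_centralizerVec_stdE hi), neg_zero]
    have h₀ {k : ℕ} (hk : k < 78) := F.sum_mul_combCoeff_eq_zero _ _ c (by decide)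
      (fun i => F.lie_comb (hbr i).1) (hx (by norm_num)) hk
    have h₁ {k : ℕ} (hk : k < 78) := F.sum_mul_combCoeff_eq_zero _ _ c (by decide)
      (fun i => F.lie_comb (hbr i).2) (hx (by norm_num)) hk
    have a₁ := h₀ (show 17 < 78 by norm_num)
    have a₄ := h₀ (show 31 < 78 by norm_num)
    have a₅ := h₀ (show 28 < 78 by norm_num)
    have a₆ := h₀ (show 37 < 78 by norm_num)
    have a₇ := h₀ (show 38 < 78 by norm_num)
    have a₈ := h₀ (show 41 < 78 by norm_num)
    have b₀ := h₁ (show 17 < 78 by norm_num)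
    have b₃ := h₁ (show 33 < 78 by norm_num)
    simp [Fin.sum_univ_succ, combCoeff, bracketZero, bracketOne, nat_beq_eq]
      at a₁ a₄ a₅ a₆ a₇ a₈ b₀ b₃
    have h6 : c 6 = 0 := by grind
    have h7 : c 7 = 0 := by grind
    have h9 : c 9 = c 8 := by grind
    refine ⟨![c 2, c 8, c 10, c 11], ?_⟩
    simp [Fin.sum_univ_succ, centerVec, centralizerVec, a₁, a₄, a₅, h6, h7, h9, b₀, b₃]
    module
  · rintro ⟨c, rfl⟩
    refine ⟨?_, fun y hy => ?_⟩
    · rw [sum_lie, Finset.sum_eq_zero]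
      intro i _
      rw [smul_lie, show stdE = centralizerVec 2 from rfl,
        F.lie_centerVec_centralizerVec (by norm_num) i.2, smul_zero]
    · obtain ⟨d, rfl⟩ := F.exists_eq_sum_centralizerVec hdim hy
      rw [sum_lie, Finset.sum_eq_zero]
      intro i _
      rw [lie_sum, Finset.sum_eq_zero]
      intro j _
      rw [smul_lie, lie_smul, F.lie_centerVec_centralizerVec j.2 i.2, smul_zero, smul_zero]

end E6Frame

end Centralizer

section Center

namespace E6Frame

variable {L : Type*} [LieRing L] [LieAlgebra ℂ L] (F : E6Frame L)

theorem lie_stdH_sum_centerVec {c : Fin 4 → ℂ} {m : ℂ}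
    (h : ⁅F.comb stdH, ∑ i, c i • F.comb (centerVec i)⁆ = m • ∑ i, c i • F.comb (centerVec i)) :
    ∀ i, c i ≠ 0 → m = centerWeight i := by
  intro i hi
  have hsum : ∑ i : Fin 4, (c i * (m - centerWeight i)) • F.comb (centerVec i) = 0 := by
    rw [lie_sum, Finset.smul_sum, eq_comm, ← sub_eq_zero, ← Finset.sum_sub_distrib] at h
    rw [← h]
    refine Finset.sum_congr rfl fun j _ => ?_
    rw [lie_smul, F.lie_stdH_centerVec j.2]
    module
  have := Fintype.linearIndependent_iff.1 F.linearIndependent_centerVec _ hsum i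
  exact sub_eq_zero.1 ((mul_eq_zero.1 this).resolve_left hi)

variable [FiniteDimensional ℂ L]
  (hdim : Module.finrank ℂ ↥(centralizer L (F.comb stdE)) = 12)

include hdim

theorem inCenterOfCentralizer_centerVec {i : ℕ} (hi : i < 4) :
    InCenterOfCentralizer L (F.comb stdE) (F.comb (centerVec i)) :=
  (F.inCenterOfCentralizer_iff hdim _).2 ⟨Pi.single ⟨i, hi⟩ 1, by
    rw [Finset.sum_eq_single ⟨i, hi⟩ (fun j _ hj => by rw [Pi.single_eq_of_ne hj, zero_smul])
      fun h => absurd (Finset.mem_univ _) h, Pi.single_eq_same, one_smul]⟩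

theorem exists_eigenvector_iff (m : ℂ) : (∃ z : L, z ≠ 0 ∧
    InCenterOfCentralizer L (F.comb stdE) z ∧ ⁅F.comb stdH, z⁆ = m • z) ↔
      m ∈ ({2, 8, 10} : Set ℂ) := by
  have hvec {i : ℕ} (hi : i < 4) {m : ℂ} (hm : m = centerWeight i) : ∃ z : L, z ≠ 0 ∧
      InCenterOfCentralizer L (F.comb stdE) z ∧ ⁅F.comb stdH, z⁆ = m • z :=
    ⟨_, F.linearIndependent_centerVec.ne_zero ⟨i, hi⟩, F.inCenterOfCentralizer_centerVec hdim hi,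
      by rw [hm]; exact F.lie_stdH_centerVec hi⟩
  constructor
  · rintro ⟨z, hz, hc, hm⟩
    obtain ⟨c, rfl⟩ := (F.inCenterOfCentralizer_iff hdim z).1 hc
    have key := F.lie_stdH_sum_centerVec hm
    obtain ⟨i, hi⟩ : ∃ i, c i ≠ 0 := by
      by_contra! h
      exact hz (Finset.sum_eq_zero fun i _ => by rw [h i, zero_smul])
    rw [key i hi]
    fin_cases i <;> simp [centerWeight]
  · rintro (rfl | rfl | rfl)
    · exact hvec (i := 0) (by norm_num) (by norm_num [centerWeight])
    · exact hvec (i := 1) (by norm_num) (by norm_num [centerWeight])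
    · exact hvec (i := 2) (by norm_num) (by norm_num [centerWeight])

theorem finrank_zCenter : Module.finrank ℂ ↥(zCenter L (F.comb stdE)) = 4 := by
  have h : zCenter L (F.comb stdE) =
      Submodule.span ℂ (Set.range fun i : Fin 4 => F.comb (centerVec i)) :=
    Submodule.ext fun v => (F.inCenterOfCentralizer_iff hdim v).trans
      (Submodule.mem_span_range_iff_exists_fun ℂ).symm
  rw [h, finrank_span_eq_card F.linearIndependent_centerVec, Fintype.card_fin]

theorem exists_eq_add_of_eigenvalue_ten {z : L}
    (hc : InCenterOfCentralizer L (F.comb stdE) z) (hm : ⁅F.comb stdH, z⁆ = (10 : ℂ) • z) :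
    ∃ a b : ℂ, z = a • F.comb (centerVec 2) + b • F.comb (centerVec 3) := by
  obtain ⟨c, rfl⟩ := (F.inCenterOfCentralizer_iff hdim z).1 hc
  have key := F.lie_stdH_sum_centerVec hm
  have h₀ : c 0 = 0 := by
    by_contra h
    exact absurd (key 0 h) (by norm_num [centerWeight])
  have h₁ : c 1 = 0 := by
    by_contra h
    exact absurd (key 1 h) (by norm_num [centerWeight])
  exact ⟨c 2, c 3, by simp [Fin.sum_univ_four, h₀, h₁]⟩

theorem finrank_zCenter_inf_eigenspace : Module.finrank ℂ ↥(zCenter L (F.comb stdE) ⊓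
    Module.End.eigenspace (LieAlgebra.ad ℂ L (F.comb stdH)) (10 : ℂ)) = 2 := by
  have h : zCenter L (F.comb stdE) ⊓
      Module.End.eigenspace (LieAlgebra.ad ℂ L (F.comb stdH)) (10 : ℂ) =
      Submodule.span ℂ (Set.range fun i : Fin 2 => F.comb (centerVec (Fin.natAdd 2 i))) := by
    ext z
    rw [Submodule.mem_span_range_iff_exists_fun, Submodule.mem_inf, Module.End.mem_eigenspace_iff,
      ad_apply]
    constructor
    · rintro ⟨hc, hm⟩
      obtain ⟨a, b, rfl⟩ := F.exists_eq_add_of_eigenvalue_ten hdim hc hm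
      exact ⟨![a, b], by simp [Fin.sum_univ_two]⟩
    · rintro ⟨c, rfl⟩
      constructor
      · exact Submodule.sum_mem _ fun i _ => Submodule.smul_mem _ _
          (F.inCenterOfCentralizer_centerVec hdim (Fin.natAdd 2 i).2)
      · rw [lie_sum, Finset.smul_sum]
        refine Finset.sum_congr rfl fun i _ => ?_
        rw [lie_smul, F.lie_stdH_centerVec (Fin.natAdd 2 i).2, smul_comm]
        fin_cases i <;> norm_num [centerWeight]
  have hli := F.linearIndependent_centerVec.comp (Fin.natAdd 2 : Fin 2 → Fin 4)
    (Fin.natAdd_injective 2 2)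
  rw [h]
  exact (finrank_span_eq_card hli).trans (Fintype.card_fin 2)

theorem propertyP (t : IsSl2Triple (F.comb stdH) (F.comb stdE) (F.comb stdF)) :
    PropertyP L (F.comb stdE) (F.comb stdH) (F.comb stdF) := by
  intro m hm hmax v hv hv0 z hz hhz
  have hm10 : m = 10 := by
    have hle := hmax 10 ((F.exists_eigenvector_iff hdim 10).2 (by simp))
    rcases (F.exists_eigenvector_iff hdim m).1 hm with rfl | rfl | rfl
    · norm_num [Complex.le_def] at hle
    · norm_num [Complex.le_def] at hle
    · rfl
  subst hm10
  obtain ⟨α, β, rfl⟩ := F.exists_eq_add_of_eigenvalue_ten hdim hz hhz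
  obtain ⟨c, rfl⟩ := (F.inCenterOfCentralizer_iff hdim v).1 hv
  have hsum : ∑ i : Fin 4, c i • F.comb (centerVec i) =
      c 0 • F.comb (centerVec 0) + c 1 • F.comb (centerVec 1) +
        c 2 • F.comb (centerVec 2) + c 3 • F.comb (centerVec 3) := Fin.sum_univ_four _
  rw [hsum] at hv0 ⊢
  have hcent {i : ℕ} (hi : i < 12) := F.lie_centralizerVec_stdE hi
  have hc₂ : F.comb (centerVec 2) = F.vec 40 := by simp [centerVec]
  have hc₃ : F.comb (centerVec 3) = F.vec 41 := by simp [centerVec]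
  have hzero {i j : ℕ} (hi : i ∈ [0, 1, 3, 4, 10, 11]) (h : (i, j, []) ∈ bracketTable) :
      ⁅⁅F.comb stdF, F.comb (centralizerVec i)⁆, F.comb (centerVec j)⁆ = 0 := by
    rw [F.lie_bracketF hi h, comb_nil]
  have hsingle {i j k : ℕ} {r : ℤ} (hi : i ∈ [0, 1, 3, 4, 10, 11])
      (h : (i, j, [(k, r)]) ∈ bracketTable) :
      ⁅⁅F.comb stdF, F.comb (centralizerVec i)⁆, F.comb (centerVec j)⁆ = (r : ℂ) • F.vec k := by
    rw [F.lie_bracketF hi h, comb_cons, comb_nil, add_zero]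
  have hfe {j : ℕ} (hj : j < 4) : ⁅⁅F.comb stdF, F.comb stdE⁆, F.comb (centerVec j)⁆ =
      -(centerWeight j : ℂ) • F.comb (centerVec j) := by
    rw [← lie_skew (F.comb stdF), t.lie_e_f, neg_lie, F.lie_stdH_centerVec hj, neg_smul]
  have key {x y : L} (hx : ⁅x, F.comb stdE⁆ = 0) (hy : ⁅y, F.comb stdE⁆ = 0) (r s : ℂ) :
      ⁅r • x + s • y, F.comb stdE⁆ = 0 := by
    rw [add_lie, smul_lie, smul_lie, hx, hy, smul_zero, smul_zero, add_zero]
  have h₀₂ := hsingle (i := 0) (j := 2) (k := 41) (r := -2) (by decide) (by decide)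
  have h₀₃ := hsingle (i := 0) (j := 3) (k := 41) (r := 8) (by decide) (by decide)
  have h₁₂ := hsingle (i := 1) (j := 2) (k := 40) (r := 8) (by decide) (by decide)
  have h₁₃ := hsingle (i := 1) (j := 3) (k := 40) (r := -2) (by decide) (by decide)
  have he₂ := hfe (j := 2) (by norm_num)
  have he₃ := hfe (j := 3) (by norm_num)
  have hw₂ : (centerWeight 2 : ℂ) = 10 := by norm_num [centerWeight]
  have hw₃ : (centerWeight 3 : ℂ) = 10 := by norm_num [centerWeight]
  by_cases hc0 : c 0 = 0
  · by_cases hc1 : c 1 = 0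
    · rw [hc0, hc1, zero_smul, zero_smul, zero_add, zero_add] at hv0
      rw [hc0, hc1, zero_smul, zero_smul, zero_add, zero_add]
      by_cases ha : c 2 = 4 * c 3
      · have hd : c 3 ≠ 0 := fun hd => hv0 (by rw [ha, hd]; simp)
        refine ⟨_, key (hcent (i := 1) (by norm_num)) (lie_self _)
          ((α - 4 * β) / (30 * c 3)) (-β / (10 * c 3)), ?_⟩
        simp only [lie_add, add_lie, lie_smul, smul_lie, h₁₂, h₁₃, he₂, he₃, hw₂, hw₃]
        rw [hc₂, hc₃, ha]
        match_scalars <;> field_simp <;> ring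
      · by_cases hb : c 3 = 4 * c 2
        · have hd : c 2 ≠ 0 := fun hd => hv0 (by rw [hb, hd]; simp)
          refine ⟨_, key (hcent (i := 0) (by norm_num)) (lie_self _)
            ((β - 4 * α) / (30 * c 2)) (-α / (10 * c 2)), ?_⟩
          simp only [lie_add, add_lie, lie_smul, smul_lie, h₀₂, h₀₃, he₂, he₃, hw₂, hw₃]
          rw [hc₂, hc₃, hb]
          match_scalars <;> field_simp <;> ring
        · obtain ⟨r, hr⟩ : ∃ r, r * (8 * c 3 - 2 * c 2) = β :=
            ⟨_, div_mul_cancel₀ β fun h => ha (by linear_combination -h / 2)⟩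
          obtain ⟨s, hs⟩ : ∃ s, s * (8 * c 2 - 2 * c 3) = α :=
            ⟨_, div_mul_cancel₀ α fun h => hb (by linear_combination -h / 2)⟩
          refine ⟨_, key (hcent (i := 0) (by norm_num)) (hcent (i := 1) (by norm_num)) r s, ?_⟩
          simp only [lie_add, add_lie, lie_smul, smul_lie, h₀₂, h₀₃, h₁₂, h₁₃]
          rw [hc₂, hc₃, ← hr, ← hs]
          match_scalars <;> ring
    · refine ⟨_, key (hcent (i := 3) (by norm_num)) (hcent (i := 4) (by norm_num))
        (β / (8 * c 1)) (α / (8 * c 1)), ?_⟩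
      simp only [hc0, zero_smul, zero_add, lie_add, add_lie, lie_smul, smul_lie,
        hsingle (i := 3) (j := 1) (k := 41) (r := 8) (by decide) (by decide),
        hsingle (i := 4) (j := 1) (k := 40) (r := 8) (by decide) (by decide),
        hzero (i := 3) (j := 2) (by decide) (by decide),
        hzero (i := 3) (j := 3) (by decide) (by decide),
        hzero (i := 4) (j := 2) (by decide) (by decide),
        hzero (i := 4) (j := 3) (by decide) (by decide)]
      rw [hc₂, hc₃]
      match_scalars <;> field_simp
  · refine ⟨_, key (hcent (i := 10) (by norm_num)) (hcent (i := 11) (by norm_num))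
      (-α / (10 * c 0)) (-β / (10 * c 0)), ?_⟩
    simp only [lie_add, add_lie, lie_smul, smul_lie,
      hsingle (i := 10) (j := 0) (k := 40) (r := -10) (by decide) (by decide),
      hsingle (i := 11) (j := 0) (k := 41) (r := -10) (by decide) (by decide),
      hzero (i := 10) (j := 1) (by decide) (by decide),
      hzero (i := 10) (j := 2) (by decide) (by decide),
      hzero (i := 10) (j := 3) (by decide) (by decide),
      hzero (i := 11) (j := 1) (by decide) (by decide),
      hzero (i := 11) (j := 2) (by decide) (by decide),
      hzero (i := 11) (j := 3) (by decide) (by decide)]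
    rw [hc₂, hc₃]
    match_scalars <;> field_simp

end E6Frame

end Center

end E6Orbit

/-- For the distinguished nilpotent orbit of `E₆` with `dim 𝔤^e = 12`:
`dim 𝔷(𝔤^e) = 4`, the eigenvalues of `ad h` on `𝔷(𝔤^e)` are `2, 8, 10` with the eigenvalue
`10` of multiplicity `2`, and `e` satisfies property (P). -/
theorem e6_second_orbit_propertyP
    (L : Type*) [LieRing L] [LieAlgebra ℂ L] [FiniteDimensional ℂ L]
    [LieAlgebra.IsSimple ℂ L] (htype : Nonempty (L ≃ₗ⁅ℂ⁆ LieAlgebra.e₆ ℂ))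
    (e h f : L) (ht : IsSl2Triple h e f) (he : IsNilpotent (LieAlgebra.ad ℂ L e))
    (hdist : IsDistinguished L e)
    (hdim : Module.finrank ℂ ↥(centralizer L e) = 12) :
    Module.finrank ℂ ↥(zCenter L e) = 4 ∧
    (∀ m : ℂ, (∃ z : L, z ≠ 0 ∧ InCenterOfCentralizer L e z ∧ ⁅h, z⁆ = m • z) ↔
      m ∈ ({2, 8, 10} : Set ℂ)) ∧
    Module.finrank ℂ
      ↥(zCenter L e ⊓ Module.End.eigenspace (LieAlgebra.ad ℂ L h) (10 : ℂ)) = 2 ∧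
    PropertyP L e h f := by
  obtain ⟨F₀⟩ := E6Orbit.nonempty_e6Frame htype
  have : LieAlgebra.IsSemisimple ℂ L := inferInstance
  have : LieAlgebra.IsKilling ℂ L := inferInstance
  have : Nontrivial L := ⟨h, 0, ht.h_ne_zero⟩
  obtain ⟨F, rfl, rfl, rfl⟩ := E6Orbit.E6Frame.exists_frame_comb_eq F₀ ht hdist hdim
  exact ⟨F.finrank_zCenter hdim, F.exists_eigenvector_iff hdim,
    F.finrank_zCenter_inf_eigenspace hdim, F.propertyP hdim ht⟩
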